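/- arXiv:1210.3063 — 5 statements merged into one kernel-verified Lean document; each statement's English description precedes it below -/
import Mathlib

section
/- For all integers p ≥ 1, k ≥ 1 and every tuple (j_0, j_1, ..., j_p) of nonnegative integers with j_0 + j_1 + ... + j_p = pk, the number N_0(k,(j_0,...,j_p)) of noncrossing pair partitions of {1,...,2pk} adapted to W_0^k whose right-leg statistics are (j_0,...,j_p) satisfies k · N_0(k,(j_0,...,j_p)) = C(k, j_0 + 1) · C(k, j_1) ··· C(k, j_p), i.e. N_0(k,(j_0,...,j_p)) is the generalized Fuss-Narayana number (1/k)·C(k, j_0+1)·∏_{i=1}^{p} C(k, j_i). -/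
/-- The letter at position `r` (1-based, `1 ≤ r ≤ 2p`) of the word
`W₀ = 1 2 … p p* … 2* 1*`; here `(l, false)` encodes the letter `l` and
`(l, true)` encodes the starred letter `l*`. -/
def letter0 (p r : ℕ) : ℕ × Bool :=
  if r ≤ p then (r, false) else (2 * p + 1 - r, true)

/-- The label of position `m` (1-based) under the periodic word `Wᵢᵏ`, where `Wᵢ`
is the cyclic shift of `W₀` to the right by `i` positions. -/
def labelW (p i m : ℕ) : ℕ × Bool :=
  letter0 p ((m - 1 + (2 * p - i)) % (2 * p) + 1)

/-- `π` is a noncrossing pair partition of `{1, …, m}`, encoded as the finite set of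
its blocks, each block written as an ordered pair `(a, b)` with `a < b`:
all entries lie in `{1, …, m}`, every point of `{1, …, m}` is covered, distinct
blocks are disjoint, and no two blocks cross. -/
def IsNCPP (m : ℕ) (π : Finset (ℕ × ℕ)) : Prop :=
  (∀ b ∈ π, 1 ≤ b.1 ∧ b.2 ≤ m ∧ b.1 < b.2) ∧
  (∀ x, 1 ≤ x → x ≤ m → ∃ b ∈ π, x = b.1 ∨ x = b.2) ∧
  (∀ b ∈ π, ∀ c ∈ π, (b.1 = c.1 ∨ b.1 = c.2 ∨ b.2 = c.1 ∨ b.2 = c.2) → b = c) ∧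
  (∀ b ∈ π, ∀ c ∈ π, ¬(b.1 < c.1 ∧ c.1 < b.2 ∧ b.2 < c.2))

/-- `π ∈ NC²₂ₚₖ(Wᵢᵏ)`: a noncrossing pair partition of `{1, …, 2pk}` each of whose
blocks consists of a position labelled `l` and a position labelled `l*` for some
`l ∈ {1, …, p}` (labels taken from the word `Wᵢᵏ`). -/
def AdaptedNCPP (p i k : ℕ) (π : Finset (ℕ × ℕ)) : Prop :=
  IsNCPP (2 * p * k) π ∧
  ∀ b ∈ π, ∃ l, 1 ≤ l ∧ l ≤ p ∧
    ((labelW p i b.1 = (l, false) ∧ labelW p i b.2 = (l, true)) ∨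
     (labelW p i b.1 = (l, true) ∧ labelW p i b.2 = (l, false)))

/-- The right-leg statistic `jₗ(π) = |R_{l+1}(π)| + |R_{l}*(π)|`: the number of blocks
whose right leg (larger element) is labelled `l+1`, plus the number of blocks whose
right leg is labelled `l*` (the conventions `R₀* = R_{p+1} = ∅` hold automatically,
since those labels never occur). -/
def jstat (p i : ℕ) (π : Finset (ℕ × ℕ)) (l : ℕ) : ℕ :=
  (π.filter fun b => labelW p i b.2 = (l + 1, false)).card +
  (π.filter fun b => labelW p i b.2 = (l, true)).card

open Classical in
/-- The finset `NC²₂ₚₖ(Wᵢᵏ)` of noncrossing pair partitions of `{1, …, 2pk}`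
adapted to `Wᵢᵏ`. -/
noncomputable def NCset (p i k : ℕ) : Finset (Finset (ℕ × ℕ)) :=
  (Finset.Icc 1 (2 * p * k) ×ˢ Finset.Icc 1 (2 * p * k)).powerset.filter
    (AdaptedNCPP p i k)

open Classical in
/-- `Nᵢ(k, (j₀, …, j_p))`: the number of `π ∈ NC²₂ₚₖ(Wᵢᵏ)` with `jₗ(π) = jₗ`
for all `0 ≤ l ≤ p`. -/
noncomputable def Ncount (p i k : ℕ) (j : Fin (p + 1) → ℕ) : ℕ :=
  ((NCset p i k).filter fun π => ∀ l : Fin (p + 1), jstat p i π (l : ℕ) = j l).card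

/-- The generating function `𝒩ᵢ(x, d) = Σ_k (Σ_j Nᵢ(k, j) d^j) x^k ∈ ℝ[[x]]`;
for each `k` only finitely many of the counts `Nᵢ(k, j)` are nonzero, so the inner
`tsum` is a finite sum. -/
noncomputable def genFun (p i : ℕ) (d : Fin (p + 1) → ℝ) : PowerSeries ℝ :=
  PowerSeries.mk fun k =>
    ∑' j : Fin (p + 1) → ℕ, (Ncount p i k j : ℝ) * ∏ l, d l ^ j l


section FN
open Finset

/-- noncrossing pairings of `[a, e)` with all blocks satisfying `m`. -/
def FNpred (m : ℕ → ℕ → Prop) (a e : ℕ) (π : Finset (ℕ × ℕ)) : Prop :=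
  (∀ b ∈ π, a ≤ b.1 ∧ b.2 < e ∧ b.1 < b.2) ∧
  (∀ x, a ≤ x → x < e → ∃ b ∈ π, x = b.1 ∨ x = b.2) ∧
  (∀ b ∈ π, ∀ c ∈ π, (b.1 = c.1 ∨ b.1 = c.2 ∨ b.2 = c.1 ∨ b.2 = c.2) → b = c) ∧
  (∀ b ∈ π, ∀ c ∈ π, ¬(b.1 < c.1 ∧ c.1 < b.2 ∧ b.2 < c.2)) ∧
  (∀ b ∈ π, m b.1 b.2)

open Classical in
noncomputable def FNset (m : ℕ → ℕ → Prop) (a e : ℕ) : Finset (Finset (ℕ × ℕ)) :=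
  (Finset.Ico a e ×ˢ Finset.Ico a e).powerset.filter (FNpred m a e)

theorem mem_FNset {m : ℕ → ℕ → Prop} {a e : ℕ} {π : Finset (ℕ × ℕ)} :
    π ∈ FNset m a e ↔ FNpred m a e π := by
  classical
  unfold FNset
  rw [Finset.mem_filter, Finset.mem_powerset, and_iff_right_iff_imp]
  intro h b hb
  have := h.1 b hb
  rw [Finset.mem_product, Finset.mem_Ico, Finset.mem_Ico]
  omega

variable {R : Type*} [CommRing R]

noncomputable def FNsum (m : ℕ → ℕ → Prop) (wt : ℕ → R) (a e : ℕ) : R :=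
  ∑ π ∈ FNset m a e, ∏ b ∈ π, wt b.2

theorem FNsum_self (m : ℕ → ℕ → Prop) (wt : ℕ → R) (a : ℕ) : FNsum m wt a a = 1 := by
  have : FNset m a a = {∅} := by
    ext π
    rw [mem_FNset, Finset.mem_singleton]
    constructor
    · intro h
      rw [Finset.eq_empty_iff_forall_notMem]
      intro b hb
      have := h.1 b hb
      omega
    · rintro rfl
      refine ⟨by simp, fun x _ _ => by omega, by simp, by simp, by simp⟩
  simp [FNsum, this]

theorem FNpred_join {m : ℕ → ℕ → Prop} {a c e : ℕ} (hac : a < c) (hce : c < e) (hm : m a c)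
    {π₁ π₂ : Finset (ℕ × ℕ)} (h₁ : FNpred m (a+1) c π₁) (h₂ : FNpred m (c+1) e π₂) :
    FNpred m a e (insert (a, c) (π₁ ∪ π₂)) := by
  obtain ⟨r₁, c₁, d₁, n₁, m₁⟩ := h₁
  obtain ⟨r₂, c₂, d₂, n₂, m₂⟩ := h₂
  refine ⟨?_, ?_, ?_, ?_, ?_⟩
  · intro b hb
    rw [Finset.mem_insert, Finset.mem_union] at hb
    rcases hb with rfl | hb | hb
    · simp; omega
    · have := r₁ b hb; omega
    · have := r₂ b hb; omega
  · intro x hx hx'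
    by_cases h1 : x = a
    · exact ⟨(a, c), by simp, by simp [h1]⟩
    by_cases h2 : x = c
    · exact ⟨(a, c), by simp, by simp [h2]⟩
    by_cases h3 : x < c
    · obtain ⟨b, hb, hh⟩ := c₁ x (by omega) h3
      exact ⟨b, by simp [hb], hh⟩
    · obtain ⟨b, hb, hh⟩ := c₂ x (by omega) hx'
      exact ⟨b, by simp [hb], hh⟩
  · intro b hb b' hb' h
    rw [Finset.mem_insert, Finset.mem_union] at hb hb'
    rcases hb with rfl | hb | hb <;> rcases hb' with rfl | hb' | hb'
    · rfl
    · have := r₁ b' hb'; simp at h; omega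
    · have := r₂ b' hb'; simp at h; omega
    · have := r₁ b hb; simp at h; omega
    · exact d₁ b hb b' hb' h
    · have := r₁ b hb; have := r₂ b' hb'; omega
    · have := r₂ b hb; simp at h; omega
    · have := r₂ b hb; have := r₁ b' hb'; omega
    · exact d₂ b hb b' hb' h
  · intro b hb b' hb' h
    rw [Finset.mem_insert, Finset.mem_union] at hb hb'
    rcases hb with rfl | hb | hb <;> rcases hb' with rfl | hb' | hb'
    · simp at h
    · have := r₁ b' hb'; simp at h; omega
    · have := r₂ b' hb'; simp at h; omega
    · have := r₁ b hb; simp at h; omega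
    · exact n₁ b hb b' hb' h
    · have := r₁ b hb; have := r₂ b' hb'; omega
    · have := r₂ b hb; simp at h; omega
    · have := r₂ b hb; have := r₁ b' hb'; omega
    · exact n₂ b hb b' hb' h
  · intro b hb
    rw [Finset.mem_insert, Finset.mem_union] at hb
    rcases hb with rfl | hb | hb
    · exact hm
    · exact m₁ b hb
    · exact m₂ b hb

theorem FN_filter_left {a c e : ℕ} {m : ℕ → ℕ → Prop} (_hac : a < c)
    {π₁ π₂ : Finset (ℕ × ℕ)} (h₁ : FNpred m (a+1) c π₁) (h₂ : FNpred m (c+1) e π₂) :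
    (insert (a, c) (π₁ ∪ π₂)).filter (fun b => b.2 < c) = π₁ := by
  ext b
  simp only [Finset.mem_filter, Finset.mem_insert, Finset.mem_union]
  constructor
  · rintro ⟨rfl | h | h, hb⟩
    · simp at hb
    · exact h
    · have := h₂.1 b h; omega
  · intro h
    have := h₁.1 b h
    exact ⟨Or.inr (Or.inl h), by omega⟩

theorem FN_filter_right {a c e : ℕ} {m : ℕ → ℕ → Prop} (_hac : a < c)
    {π₁ π₂ : Finset (ℕ × ℕ)} (h₁ : FNpred m (a+1) c π₁) (h₂ : FNpred m (c+1) e π₂) :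
    (insert (a, c) (π₁ ∪ π₂)).filter (fun b => c < b.1) = π₂ := by
  ext b
  simp only [Finset.mem_filter, Finset.mem_insert, Finset.mem_union]
  constructor
  · rintro ⟨rfl | h | h, hb⟩
    · simp at hb; omega
    · have := h₁.1 b h; omega
    · exact h
  · intro h
    have := h₂.1 b h
    exact ⟨Or.inr (Or.inr h), by omega⟩

theorem FNpred_split {m : ℕ → ℕ → Prop} {a c e : ℕ} {π : Finset (ℕ × ℕ)}
    (h : FNpred m a e π) (hac : (a, c) ∈ π) :
    FNpred m (a+1) c (π.filter (fun b => b.2 < c)) ∧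
    FNpred m (c+1) e (π.filter (fun b => c < b.1)) ∧
    insert (a, c) (π.filter (fun b => b.2 < c) ∪ π.filter (fun b => c < b.1)) = π := by
  obtain ⟨r, cv, d, n, mm⟩ := h
  have key : ∀ b ∈ π, b = (a, c) ∨ (a < b.1 ∧ b.2 < c) ∨ c < b.1 := by
    intro b hb
    by_cases hE : b = (a, c)
    · exact Or.inl hE
    · have hd : ¬ (b.1 = a ∨ b.1 = c ∨ b.2 = a ∨ b.2 = c) := fun hh => hE (d b hb _ hac hh)
      have hn : ¬ (a < b.1 ∧ b.1 < c ∧ c < b.2) := n _ hac b hb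
      have := r b hb
      omega
  have hr := r _ hac
  simp only at hr
  refine ⟨⟨?_, ?_, ?_, ?_, ?_⟩, ⟨?_, ?_, ?_, ?_, ?_⟩, ?_⟩
  · intro b hb
    rw [Finset.mem_filter] at hb
    have := r b hb.1
    rcases key b hb.1 with rfl | h | h
    · simp at hb
    · omega
    · omega
  · intro x hx hx'
    obtain ⟨b, hb, hh⟩ := cv x (by omega) (by omega)
    refine ⟨b, ?_, hh⟩
    rw [Finset.mem_filter]
    refine ⟨hb, ?_⟩
    have := r b hb
    rcases key b hb with rfl | h | h
    · simp at hh; omega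
    · omega
    · omega
  · intro b hb b' hb'
    exact d b (Finset.mem_filter.1 hb).1 b' (Finset.mem_filter.1 hb').1
  · intro b hb b' hb'
    exact n b (Finset.mem_filter.1 hb).1 b' (Finset.mem_filter.1 hb').1
  · intro b hb
    exact mm b (Finset.mem_filter.1 hb).1
  · intro b hb
    rw [Finset.mem_filter] at hb
    have := r b hb.1
    omega
  · intro x hx hx'
    obtain ⟨b, hb, hh⟩ := cv x (by omega) (by omega)
    refine ⟨b, ?_, hh⟩
    rw [Finset.mem_filter]
    refine ⟨hb, ?_⟩
    have := r b hb
    rcases key b hb with rfl | h | h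
    · simp at hh; omega
    · omega
    · omega
  · intro b hb b' hb'
    exact d b (Finset.mem_filter.1 hb).1 b' (Finset.mem_filter.1 hb').1
  · intro b hb b' hb'
    exact n b (Finset.mem_filter.1 hb).1 b' (Finset.mem_filter.1 hb').1
  · intro b hb
    exact mm b (Finset.mem_filter.1 hb).1
  · ext b
    simp only [Finset.mem_filter, Finset.mem_insert, Finset.mem_union]
    constructor
    · rintro (rfl | h | h)
      · exact hac
      · exact h.1
      · exact h.1
    · intro hb
      rcases key b hb with h | h | h
      · exact Or.inl h
      · exact Or.inr (Or.inl ⟨hb, h.2⟩)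
      · exact Or.inr (Or.inr ⟨hb, h⟩)

open Classical in
theorem FNsum_first (m : ℕ → ℕ → Prop) (wt : ℕ → R) {a e : ℕ} (hae : a < e) :
    FNsum m wt a e = ∑ c ∈ Finset.Ico (a+1) e,
      if m a c then wt c * FNsum m wt (a+1) c * FNsum m wt (c+1) e else 0 := by
  rw [← Finset.sum_filter]
  have e1 : ∀ c, wt c * FNsum m wt (a+1) c * FNsum m wt (c+1) e =
      ∑ q ∈ FNset m (a+1) c ×ˢ FNset m (c+1) e,
        wt c * (∏ b ∈ q.1, wt b.2) * (∏ b ∈ q.2, wt b.2) := by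
    intro c
    rw [Finset.sum_product]
    simp only [FNsum, Finset.mul_sum, Finset.sum_mul]
    rw [Finset.sum_comm]
  simp only [e1]
  rw [Finset.sum_sigma']
  symm
  unfold FNsum
  refine Finset.sum_bij (fun x _ => insert (a, x.1) (x.2.1 ∪ x.2.2)) ?_ ?_ ?_ ?_
  · rintro ⟨c, π₁, π₂⟩ hx
    simp only [Finset.mem_sigma, Finset.mem_filter, Finset.mem_Ico, Finset.mem_product, mem_FNset] at hx ⊢
    exact FNpred_join (by omega) (by omega) hx.1.2 hx.2.1 hx.2.2
  · rintro ⟨c, π₁, π₂⟩ hx ⟨c', π₁', π₂'⟩ hx' heq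
    simp only [Finset.mem_sigma, Finset.mem_filter, Finset.mem_Ico, Finset.mem_product, mem_FNset] at hx hx' heq
    have hcc : c = c' := by
      have : (a, c) ∈ insert (a, c') (π₁' ∪ π₂') := by rw [← heq]; simp
      rw [Finset.mem_insert, Finset.mem_union] at this
      rcases this with h | h | h
      · simpa using h
      · have := hx'.2.1.1 _ h; simp at this
      · have := hx'.2.2.1 _ h; simp at this; omega
    subst hcc
    have h1 := FN_filter_left (by omega) hx.2.1 hx.2.2
    have h2 := FN_filter_right (by omega) hx.2.1 hx.2.2
    rw [heq, FN_filter_left (by omega) hx'.2.1 hx'.2.2] at h1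
    rw [heq, FN_filter_right (by omega) hx'.2.1 hx'.2.2] at h2
    rw [h1, h2]
  · intro π hπ
    rw [mem_FNset] at hπ
    obtain ⟨⟨a', c⟩, hb, hh⟩ := hπ.2.1 a le_rfl hae
    have hr := hπ.1 _ hb
    simp only at hr hh
    have : a = a' := by omega
    subst this
    obtain ⟨h1, h2, h3⟩ := FNpred_split hπ hb
    refine ⟨⟨c, _, _⟩, ?_, h3⟩
    simp only [Finset.mem_sigma, Finset.mem_filter, Finset.mem_Ico, Finset.mem_product, mem_FNset]
    exact ⟨⟨by omega, hπ.2.2.2.2 _ hb⟩, h1, h2⟩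
  · rintro ⟨c, π₁, π₂⟩ hx
    simp only [Finset.mem_sigma, Finset.mem_filter, Finset.mem_Ico, Finset.mem_product, mem_FNset] at hx ⊢
    rw [Finset.prod_insert, Finset.prod_union, mul_assoc]
    · rw [Finset.disjoint_left]
      intro b hb hb'
      have := hx.2.1.1 _ hb
      have := hx.2.2.1 _ hb'
      omega
    · rw [Finset.mem_union]
      rintro (h | h)
      · have := hx.2.1.1 _ h; simp at this
      · have := hx.2.2.1 _ h; simp at this; omega

open Classical in
theorem FNsum_last (m : ℕ → ℕ → Prop) (wt : ℕ → R) (n : ℕ) : ∀ {a e : ℕ}, a ≤ e → e - a = n →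
    FNsum m wt a (e+1) = ∑ c ∈ Finset.Ico a e,
      if m c e then wt e * FNsum m wt a c * FNsum m wt (c+1) e else 0 := by
  induction n using Nat.strong_induction_on with
  | _ n ih =>
  intro a e hae hn
  rcases Nat.eq_or_lt_of_le hae with h | h
  · subst h
    rw [FNsum_first m wt (by omega)]
    simp
  rw [FNsum_first m wt (by omega), Finset.sum_Ico_succ_top (by omega), FNsum_self,
    Finset.sum_eq_sum_Ico_succ_bot h, FNsum_self]
  rw [add_comm]
  congr 1
  · split_ifs <;> ring
  have lhs : ∀ c ∈ Finset.Ico (a+1) e,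
      (if m a c then wt c * FNsum m wt (a + 1) c * FNsum m wt (c + 1) (e + 1) else 0) =
      ∑ d ∈ Finset.Ico (c+1) e, if m a c ∧ m d e then
        wt c * wt e * FNsum m wt (a+1) c * FNsum m wt (c+1) d * FNsum m wt (d+1) e else 0 := by
    intro c hc
    rw [Finset.mem_Ico] at hc
    rw [ih (e - (c+1)) (by omega) (by omega) rfl]
    by_cases h1 : m a c
    · simp only [h1, if_true, true_and, Finset.mul_sum]
      refine Finset.sum_congr rfl fun d _ => ?_
      split_ifs <;> ring
    · simp [h1]
  have rhs : ∀ d ∈ Finset.Ico (a+1) e,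
      (if m d e then wt e * FNsum m wt a d * FNsum m wt (d + 1) e else 0) =
      ∑ c ∈ Finset.Ico (a+1) d, if m a c ∧ m d e then
        wt c * wt e * FNsum m wt (a+1) c * FNsum m wt (c+1) d * FNsum m wt (d+1) e else 0 := by
    intro d hd
    rw [Finset.mem_Ico] at hd
    rw [FNsum_first m wt (show a < d by omega)]
    by_cases h1 : m d e
    · simp only [h1, if_true, and_true, Finset.mul_sum, Finset.sum_mul]
      refine Finset.sum_congr rfl fun d _ => ?_
      split_ifs <;> ring
    · simp [h1]
  rw [Finset.sum_congr rfl lhs, Finset.sum_congr rfl rhs]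
  apply Finset.sum_comm'
  intro x y
  simp only [Finset.mem_Ico]
  omega

theorem FNsum_rotate (m : ℕ → ℕ → Prop) (wt : ℕ → R) {a e : ℕ} (hae : a < e) (w : R)
    (hm : ∀ c, a < c → c < e → (m a c ↔ m c e)) (hw : wt e = wt a)
    (hw' : ∀ c, m a c → wt c = w) :
    wt a * FNsum m wt a e = w * FNsum m wt (a+1) (e+1) := by
  classical
  rw [FNsum_first m wt hae, FNsum_last m wt _ (show a + 1 ≤ e by omega) rfl, Finset.mul_sum,
    Finset.mul_sum]
  refine Finset.sum_congr rfl fun c hc => ?_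
  rw [Finset.mem_Ico] at hc
  have := hm c (by omega) (by omega)
  by_cases h : m a c
  · rw [if_pos h, if_pos (this.1 h), hw' c h, hw]; ring
  · rw [if_neg h, if_neg (fun h' => h (this.2 h'))]; ring

theorem FNsum_shift (m : ℕ → ℕ → Prop) (wt : ℕ → R) (T : ℕ)
    (hm : ∀ a c, 1 ≤ a → 1 ≤ c → (m (a + T) (c + T) ↔ m a c))
    (hw : ∀ a, 1 ≤ a → wt (a + T) = wt a) (n : ℕ) :
    ∀ a, 1 ≤ a → FNsum m wt (a + T) (a + n + T) = FNsum m wt a (a + n) := by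
  classical
  induction n using Nat.strong_induction_on with
  | _ n ih =>
  intro a ha
  rcases Nat.eq_zero_or_pos n with h | h
  · subst h; simp [FNsum_self]
  rw [FNsum_first m wt (by omega), FNsum_first m wt (show a < a + n by omega)]
  have := Finset.sum_Ico_add' (fun c => if m (a + T) c then
    wt c * FNsum m wt (a + T + 1) c * FNsum m wt (c + 1) (a + n + T) else 0) (a+1) (a+n) T
  rw [show a + T + 1 = a + 1 + T by omega] at *
  rw [← this]
  refine Finset.sum_congr rfl fun c hc => ?_
  rw [Finset.mem_Ico] at hc
  obtain ⟨n1, rfl⟩ := Nat.exists_eq_add_of_le hc.1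
  obtain ⟨n2, h2⟩ := Nat.exists_eq_add_of_lt hc.2
  have e1 := ih n1 (by omega) (a+1) (by omega)
  have e2 := ih n2 (by omega) (a + 1 + n1 + 1) (by omega)
  rw [show a + n = a + 1 + n1 + 1 + n2 by omega, hw _ (by omega), e1, show a + 1 + n1 + T + 1 = a + 1 + n1 + 1 + T by omega, e2]
  simp only [hm a (a+1+n1) ha (by omega)]

end FN

section FNLag
open Finset Polynomial

/-- Lagrange inversion (polynomial `φ`), by induction on `n`. -/
theorem FN_lagrange {R : Type*} [CommRing R] [Algebra ℚ R] (φ : R[X]) (U : PowerSeries R)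
    (hU : U = PowerSeries.X * Polynomial.aeval U φ) (n : ℕ) :
    ∀ m, 1 ≤ m → m ≤ n →
      (n : R) * PowerSeries.coeff n (U ^ m) = (m : R) * (φ ^ n).coeff (n - m) := by
  have hz : PowerSeries.constantCoeff U = 0 := by
    rw [hU]; simp
  have hpow : ∀ m, U ^ m = PowerSeries.X ^ m * Polynomial.aeval U (φ ^ m) := by
    intro m
    conv_lhs => rw [hU]
    rw [mul_pow, map_pow]
  have hlow : ∀ i N, N < i → PowerSeries.coeff N (U ^ i) = 0 := by
    intro i N h
    rw [hpow, PowerSeries.coeff_X_pow_mul', if_neg (by omega)]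
  induction n using Nat.strong_induction_on with
  | _ n ih =>
  intro m hm hmn
  have hexp : PowerSeries.coeff n (U ^ m) =
      ∑ i ∈ range (n - m + 1), (φ ^ m).coeff i * PowerSeries.coeff (n - m) (U ^ i) := by
    rw [hpow, PowerSeries.coeff_X_pow_mul', if_pos hmn]
    rw [Polynomial.aeval_eq_sum_range' (n := max ((φ^m).natDegree + 1) (n - m + 1)) (by omega)]
    rw [map_sum]
    simp only [PowerSeries.coeff_smul, smul_eq_mul]
    symm
    apply Finset.sum_subset
    · intro i; simp only [mem_range]; omega
    · intro i _ hi
      simp only [mem_range] at hi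
      rw [hlow _ _ (by omega), mul_zero]
  rcases Nat.eq_or_lt_of_le hmn with h | h
  · subst h
    rw [hexp]; simp
  set N := n - m with hN
  have hNn : (n : R) = N + m := by
    rw [← Nat.cast_add]; congr 1; omega
  have h1 : (N : R) * PowerSeries.coeff n (U ^ m) =
      ∑ i ∈ range (N + 1), ((i : R) * (φ ^ m).coeff i) * (φ ^ N).coeff (N - i) := by
    rw [hexp, mul_sum]
    refine sum_congr rfl fun i hi => ?_
    rw [mem_range] at hi
    rcases Nat.eq_zero_or_pos i with h0 | h0
    · subst h0
      have : PowerSeries.coeff N (1 : PowerSeries R) = 0 := by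
        rw [PowerSeries.coeff_one, if_neg (by omega)]
      simp [this]
    · have := ih N (by omega) i h0 (by omega)
      linear_combination (φ ^ m).coeff i * this
  have h2 : ∑ i ∈ range (N + 1), ((i : R) * (φ ^ m).coeff i) * (φ ^ N).coeff (N - i)
      = (X * derivative (φ ^ m) * φ ^ N).coeff N := by
    rw [Polynomial.coeff_mul, Finset.Nat.sum_antidiagonal_eq_sum_range_succ_mk]
    refine sum_congr rfl fun i hi => ?_
    congr 1
    cases i with
    | zero => simp
    | succ i => rw [coeff_X_mul, coeff_derivative]; push_cast; ring
  have h3 : C (n : R) * (X * derivative (φ ^ m) * φ ^ N) = C (m : R) * (X * derivative (φ ^ n)) := by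
    rw [derivative_pow, derivative_pow]
    have : φ ^ (n - 1) = φ ^ (m - 1) * φ ^ N := by rw [← pow_add]; congr 1; omega
    rw [this]; simp only [map_natCast]; ring
  have h4 : (X * derivative (φ ^ n)).coeff N = N * (φ ^ n).coeff N := by
    obtain ⟨M, hM⟩ : ∃ M, N = M + 1 := ⟨N - 1, by omega⟩
    rw [hM, coeff_X_mul, coeff_derivative]; push_cast; ring
  have h5 := congrArg (fun q => q.coeff N) h3
  simp only [coeff_C_mul, h4] at h5
  rw [← h2, ← h1] at h5
  have hu : IsUnit (N : R) := by
    have : IsUnit ((N : ℚ)) := by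
      rw [isUnit_iff_ne_zero]; exact_mod_cast (by omega)
    simpa using this.map (algebraMap ℚ R)
  apply hu.mul_left_cancel
  linear_combination h5

theorem FN_coeff (p k : ℕ) (s : Fin (p+1) →₀ ℕ) (hs : ∑ l, s l + (k - 1) = (p + 1) * k) :
    MvPolynomial.coeff s
      (((∏ l : Fin (p+1), (C (MvPolynomial.X l : MvPolynomial (Fin (p+1)) ℚ) + X)) ^ k).coeff (k - 1))
      = ∏ l, ((k.choose (s l) : ℕ) : ℚ) := by
  classical
  have e1 : (∏ l : Fin (p+1), (C (MvPolynomial.X l : MvPolynomial (Fin (p+1)) ℚ) + X)) ^ k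
      = ∑ f ∈ Fintype.piFinset (fun _ : Fin (p+1) => range (k+1)),
        (C (MvPolynomial.monomial (Finsupp.equivFunOnFinite.symm f)
          (∏ l, ((k.choose (f l) : ℕ) : ℚ))) * X ^ (∑ l, (k - f l))) := by
    rw [← Finset.prod_pow]
    simp only [add_pow]
    rw [Finset.prod_univ_sum]
    refine sum_congr rfl fun f _ => ?_
    rw [prod_mul_distrib, prod_mul_distrib, Finset.prod_pow_eq_pow_sum]
    rw [MvPolynomial.monomial_eq, Finsupp.prod_fintype _ _ (by simp)]
    simp only [map_mul, map_prod, map_pow, map_natCast]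
    simp only [Finsupp.equivFunOnFinite_symm_apply_apply]
    ring
  rw [e1, finsetSum_coeff, MvPolynomial.coeff_sum]
  simp only [coeff_C_mul, coeff_X_pow]
  by_cases hk : ∀ l, s l ≤ k
  · rw [Finset.sum_eq_single (⇑s)]
    · have : k - 1 = ∑ l, (k - s l) := by
        have : ∑ l, (k - s l) + ∑ l, s l = (p+1) * k := by
          rw [← sum_add_distrib]
          rw [sum_congr rfl (fun l _ => Nat.sub_add_cancel (hk l))]
          simp
        omega
      rw [if_pos this, mul_one, MvPolynomial.coeff_monomial, if_pos (by ext; simp)]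
    · intro f hf hne
      split_ifs with h
      · rw [mul_one, MvPolynomial.coeff_monomial, if_neg]
        intro h'; apply hne; rw [← h']; ext; simp
      · simp
    · intro h
      exfalso; apply h
      rw [Fintype.mem_piFinset]
      intro l; rw [mem_range]; have := hk l; omega
  · push Not at hk
    obtain ⟨l, hl⟩ := hk
    rw [Finset.prod_eq_zero (mem_univ l) (by rw [Nat.choose_eq_zero_of_lt hl]; simp)]
    apply Finset.sum_eq_zero
    intro f hf
    rw [Fintype.mem_piFinset] at hf
    split_ifs with h
    · rw [mul_one, MvPolynomial.coeff_monomial, if_neg]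
      intro h'
      have := hf l
      rw [mem_range] at this
      rw [← h'] at hl
      simp at hl
      omega
    · simp

end FNLag

section FNMain
open Finset

/-- the matching relation of the periodic word. -/
def FNm (p x y : ℕ) : Prop := ∃ l, 1 ≤ l ∧ l ≤ p ∧
    ((labelW p 0 x = (l, false) ∧ labelW p 0 y = (l, true)) ∨
     (labelW p 0 x = (l, true) ∧ labelW p 0 y = (l, false)))

theorem FNm_symm {p x y : ℕ} : FNm p x y ↔ FNm p y x := by
  unfold FNm
  constructor <;> rintro ⟨l, h1, h2, h | h⟩
  · exact ⟨l, h1, h2, Or.inr ⟨h.2, h.1⟩⟩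
  · exact ⟨l, h1, h2, Or.inl ⟨h.2, h.1⟩⟩
  · exact ⟨l, h1, h2, Or.inr ⟨h.2, h.1⟩⟩
  · exact ⟨l, h1, h2, Or.inl ⟨h.2, h.1⟩⟩

/-- index of the statistic counting a right leg with the given label. -/
def FNidx (q : ℕ × Bool) : ℕ := if q.2 then q.1 else q.1 - 1

theorem lab_form (p n r : ℕ) (hr : r < 2 * p) :
    labelW p 0 (2 * p * n + r + 1) = letter0 p (r + 1) := by
  unfold labelW
  congr 2
  rw [show 2 * p * n + r + 1 - 1 + (2 * p - 0) = r + 2 * p * (n + 1) by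
    rw [Nat.mul_add]; omega]
  rw [Nat.add_mul_mod_self_left, Nat.mod_eq_of_lt hr]

theorem pos_form (p x : ℕ) (hp : 1 ≤ p) (hx : 1 ≤ x) :
    ∃ n r, r < 2 * p ∧ x = 2 * p * n + r + 1 := by
  refine ⟨(x-1) / (2*p), (x-1) % (2*p), Nat.mod_lt _ (by omega), ?_⟩
  have := Nat.div_add_mod (x-1) (2*p)
  omega

theorem lab_false (p n l : ℕ) (hl : 1 ≤ l) (hlp : l ≤ p) :
    labelW p 0 (2 * p * n + l) = (l, false) := by
  have := lab_form p n (l-1) (by omega)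
  rw [show 2 * p * n + (l - 1) + 1 = 2 * p * n + l by omega, show l - 1 + 1 = l by omega] at this
  rw [this, letter0, if_pos hlp]

theorem lab_true (p n l : ℕ) (hl : 1 ≤ l) (hlp : l ≤ p) :
    labelW p 0 (2 * p * n + (2 * p + 1 - l)) = (l, true) := by
  have := lab_form p n (2 * p - l) (by omega)
  rw [show 2 * p * n + (2 * p - l) + 1 = 2 * p * n + (2 * p + 1 - l) by omega] at this
  rw [this, letter0, if_neg (by omega)]
  congr 1; omega

theorem lab_true_inv (p x l : ℕ) (hp : 1 ≤ p) (hx : 1 ≤ x) (hl : 1 ≤ l)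
    (h : labelW p 0 x = (l, true)) : ∃ n, x = 2 * p * n + (2 * p + 1 - l) := by
  obtain ⟨n, r, hr, rfl⟩ := pos_form p x hp hx
  rw [lab_form p n r hr, letter0] at h
  split_ifs at h with h'
  · simp at h
  · simp at h
    exact ⟨n, by omega⟩

theorem lab_shift (p x n : ℕ) (hp : 1 ≤ p) (hx : 1 ≤ x) :
    labelW p 0 (x + 2 * p * n) = labelW p 0 x := by
  obtain ⟨q, r, hr, rfl⟩ := pos_form p x hp hx
  rw [lab_form p q r hr, show 2 * p * q + r + 1 + 2 * p * n = 2 * p * (q + n) + r + 1 by ring,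
    lab_form p _ r hr]

variable {R : Type*} [CommRing R]

/-- weight of a right leg at `x` -/
def FNwt (p : ℕ) (d : ℕ → R) (x : ℕ) : R := d (FNidx (labelW p 0 x))

/-- weighted sum over an interval -/
noncomputable def FNS (p : ℕ) (d : ℕ → R) (a e : ℕ) : R := FNsum (FNm p) (FNwt p d) a e

theorem FNS_shift (p : ℕ) (hp : 1 ≤ p) (d : ℕ → R) (a n q : ℕ) (ha : 1 ≤ a) :
    FNS p d (a + 2 * p * q) (a + n + 2 * p * q) = FNS p d a (a + n) := by
  apply FNsum_shift _ _ _ _ _ _ _ ha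
  · intro a c ha hc
    unfold FNm
    rw [lab_shift p a q hp ha, lab_shift p c q hp hc]
  · intro a ha
    unfold FNwt
    rw [lab_shift p a q hp ha]

noncomputable def FNG (p : ℕ) (d : ℕ → R) (l : ℕ) : PowerSeries R :=
  PowerSeries.mk fun n => FNS p d (2 * p + 1 - l) (2 * p + 1 - l + 2 * p * n)

noncomputable def FNF (p : ℕ) (d : ℕ → R) (l : ℕ) : PowerSeries R :=
  PowerSeries.mk fun n => FNS p d (l + 1) (2 * p * n + (2 * p + 1 - l))

theorem FNF_top (p : ℕ) (d : ℕ → R) : FNF p d p = FNG p d p := by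
  ext n
  simp only [FNF, FNG, PowerSeries.coeff_mk]
  congr 1 <;> omega

theorem FNG_zero (p : ℕ) (hp : 1 ≤ p) (d : ℕ → R) :
    FNG p d 0 = 1 + PowerSeries.X * FNF p d 0 := by
  ext n
  cases n with
  | zero => simp [FNG, FNS, FNsum_self]
  | succ n =>
    simp only [map_add, PowerSeries.coeff_succ_X_mul, PowerSeries.coeff_one]
    simp only [FNF, FNG, PowerSeries.coeff_mk]
    have := FNS_shift p hp d 1 (2 * p * (n + 1)) 1 le_rfl
    rw [show 1 + 2 * p * 1 = 2 * p + 1 - 0 by omega,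
      show 1 + 2 * p * (n+1) + 2 * p * 1 = 2 * p + 1 - 0 + 2 * p * (n+1) by omega] at this
    rw [this]
    simp
    congr 1; ring

theorem FNF_step (p : ℕ) (hp : 1 ≤ p) (d : ℕ → R) (l : ℕ) (hl : l < p) :
    FNF p d l = PowerSeries.C (d (l+1)) * (FNF p d (l+1) * FNG p d l) := by
  classical
  ext n
  rw [PowerSeries.coeff_C_mul, PowerSeries.coeff_mul,
    Finset.Nat.sum_antidiagonal_eq_sum_range_succ_mk, Finset.mul_sum]
  simp only [FNF, FNG, PowerSeries.coeff_mk]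
  unfold FNS
  rw [FNsum_first _ _ (by omega), ← Finset.sum_filter]
  symm
  have labl : labelW p 0 (l+1) = (l+1, false) := by
    have := lab_false p 0 (l+1) (by omega) (by omega)
    simpa using this
  have hpos : ∀ i, labelW p 0 (2 * p * i + (2 * p - l)) = (l+1, true) := by
    intro i
    have := lab_true p i (l+1) (by omega) (by omega)
    rwa [show 2 * p + 1 - (l+1) = 2 * p - l by omega] at this
  refine Finset.sum_bij (fun i _ => 2 * p * i + (2 * p - l)) ?_ ?_ ?_ ?_
  · intro i hi
    rw [mem_range] at hi
    have : 2 * p * i ≤ 2 * p * n := Nat.mul_le_mul_left _ (by omega)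
    rw [mem_filter, mem_Ico]
    refine ⟨⟨by omega, by omega⟩, l+1, by omega, by omega, Or.inl ⟨labl, hpos i⟩⟩
  · intro i _ i' _ h
    have h : 2 * p * i = 2 * p * i' := by omega
    exact Nat.eq_of_mul_eq_mul_left (by omega) h
  · intro c hc
    rw [mem_filter, mem_Ico] at hc
    obtain ⟨hc, l', h1, h2, h | h⟩ := hc
    · rw [labl] at h
      have : l' = l + 1 := by have := h.1; simp at this; omega
      subst this
      obtain ⟨i, hi⟩ := lab_true_inv p c (l+1) hp (by omega) (by omega) h.2
      refine ⟨i, ?_, by omega⟩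
      rw [mem_range]
      by_contra hcon
      have : 2 * p * (n + 1) ≤ 2 * p * i := Nat.mul_le_mul_left _ (by omega)
      rw [Nat.mul_add] at this
      omega
    · rw [labl] at h
      simp at h
  · intro i hi
    rw [mem_range] at hi
    have e1 : FNwt p d (2 * p * i + (2 * p - l)) = d (l+1) := by
      rw [FNwt, hpos]; simp [FNidx]
    have eA : 2 * p + 1 - (l + 1) = 2 * p - l := by omega
    have eB := FNS_shift p hp d (2 * p + 1 - l) (2 * p * (n - i)) i (by omega)
    have h3 : 2 * p * (n - i) + 2 * p * i = 2 * p * n := by rw [← Nat.mul_add]; congr 1; omega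
    unfold FNS at eB
    rw [show 2 * p + 1 - l + 2 * p * (n - i) + 2 * p * i = 2 * p * n + (2 * p + 1 - l) by omega,
      show 2 * p + 1 - l + 2 * p * i = 2 * p * i + (2 * p - l) + 1 by omega] at eB
    rw [e1, eA, eB, mul_assoc (d (l+1))]

theorem FNG_rot (p : ℕ) (hp : 1 ≤ p) (d : ℕ → R) (l n : ℕ) (hl : l < p) (hn : 1 ≤ n) :
    d (l+1) * FNS p d (2 * p - l) (2 * p - l + 2 * p * n) =
    d l * FNS p d (2 * p + 1 - l) (2 * p + 1 - l + 2 * p * n) := by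
  have hlab : labelW p 0 (2 * p - l) = (l+1, true) := by
    have := lab_true p 0 (l+1) (by omega) (by omega)
    rwa [show 2 * p * 0 + (2 * p + 1 - (l+1)) = 2 * p - l by omega] at this
  have hs := lab_shift p (2 * p - l) n hp (by omega)
  have hn' : 2 * p ≤ 2 * p * n := Nat.le_mul_of_pos_right _ hn
  have := FNsum_rotate (FNm p) (FNwt p d) (a := 2 * p - l) (e := 2 * p - l + 2 * p * n)
    (by omega) (d l) ?_ ?_ ?_
  · have e1 : FNwt p d (2 * p - l) = d (l+1) := by rw [FNwt, hlab]; simp [FNidx]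
    rw [e1] at this
    unfold FNS
    rw [this]
    congr 2 <;> omega
  · intro c _ _
    rw [FNm_symm]
    unfold FNm
    rw [hs]
  · unfold FNwt; rw [hs]
  · rintro c ⟨l', h1, h2, h | h⟩
    · rw [hlab] at h; simp at h
    · rw [hlab] at h
      have : l' = l + 1 := by have := h.1; simp at this; omega
      subst this
      rw [FNwt, h.2]; simp [FNidx]

theorem FNG_rot_all (p : ℕ) (hp : 1 ≤ p) (d : ℕ → R) (n : ℕ) (hn : 1 ≤ n) (l : ℕ) (hl : l ≤ p) :
    d l * FNS p d (2 * p + 1 - l) (2 * p + 1 - l + 2 * p * n) =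
    d 0 * FNS p d (2 * p + 1) (2 * p + 1 + 2 * p * n) := by
  induction l with
  | zero => rfl
  | succ l ih =>
    rw [← ih (by omega), ← FNG_rot p hp d l n (by omega) hn]
    congr 2 <;> omega

theorem FNG_eq (p : ℕ) (hp : 1 ≤ p) (d : ℕ → R) (l : ℕ) (hl : l ≤ p) :
    PowerSeries.C (d l) * FNG p d l = PowerSeries.C (d l) +
      PowerSeries.X * (PowerSeries.C (d 0) * FNF p d 0) := by
  have h0 : PowerSeries.X * (PowerSeries.C (d 0) * FNF p d 0) =
      PowerSeries.C (d 0) * (FNG p d 0 - 1) := by rw [FNG_zero p hp]; ring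
  rw [h0]
  ext n
  cases n with
  | zero => simp [FNG, FNS, FNsum_self]
  | succ n =>
    have := FNG_rot_all p hp d (n+1) (by omega) l hl
    rw [map_add, PowerSeries.coeff_C_mul, PowerSeries.coeff_C_mul, map_sub, PowerSeries.coeff_one,
      PowerSeries.coeff_C]
    simp only [FNG, PowerSeries.coeff_mk]
    rw [this]; simp

theorem FNF_prod (p : ℕ) (hp : 1 ≤ p) (d : ℕ → R) (q : ℕ) (hq : q ≤ p) :
    PowerSeries.C (d 0) * FNF p d 0 =
      (∏ i ∈ range q, PowerSeries.C (d i) * FNG p d i) * (PowerSeries.C (d q) * FNF p d q) := by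
  induction q with
  | zero => simp
  | succ q ih =>
    rw [ih (by omega), prod_range_succ, FNF_step p hp d q (by omega)]
    ring

theorem FN_funeq (p : ℕ) (hp : 1 ≤ p) (d : ℕ → R) :
    PowerSeries.C (d 0) * FNF p d 0 =
      ∏ i ∈ range (p+1), (PowerSeries.C (d i) +
        PowerSeries.X * (PowerSeries.C (d 0) * FNF p d 0)) := by
  conv_lhs => rw [FNF_prod p hp d p le_rfl, FNF_top, ← prod_range_succ
    (fun i => PowerSeries.C (d i) * FNG p d i)]
  refine prod_congr rfl fun i hi => ?_
  rw [mem_range] at hi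
  exact FNG_eq p hp d i (by omega)

theorem FN_NCset (p k : ℕ) : NCset p 0 k = FNset (FNm p) 1 (2 * p * k + 1) := by
  classical
  ext π
  rw [mem_FNset]
  unfold NCset
  rw [mem_filter, mem_powerset]
  unfold AdaptedNCPP IsNCPP FNpred
  constructor
  · rintro ⟨-, ⟨h1, h2, h3, h4⟩, h5⟩
    exact ⟨fun b hb => by have := h1 b hb; omega, fun x hx hx' => h2 x hx (by omega), h3, h4, h5⟩
  · rintro ⟨h1, h2, h3, h4, h5⟩
    refine ⟨?_, ⟨fun b hb => by have := h1 b hb; omega, fun x hx hx' => h2 x hx (by omega), h3, h4⟩, h5⟩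
    intro b hb
    have := h1 b hb
    rw [mem_product, mem_Icc, mem_Icc]
    omega

/-- variables as weights -/
noncomputable def FNd (p : ℕ) (l : ℕ) : MvPolynomial (Fin (p+1)) ℚ :=
  MvPolynomial.X (Fin.ofNat (p+1) l)

theorem FN_letter (p x : ℕ) (hp : 1 ≤ p) (hx : 1 ≤ x) :
    ∃ l, 1 ≤ l ∧ l ≤ p ∧ (labelW p 0 x = (l, false) ∨ labelW p 0 x = (l, true)) := by
  obtain ⟨n, r, hr, rfl⟩ := pos_form p x hp hx
  rw [lab_form p n r hr, letter0]
  split_ifs with h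
  · exact ⟨r + 1, by omega, h, Or.inl rfl⟩
  · exact ⟨2 * p + 1 - (r + 1), by omega, by omega, Or.inr rfl⟩

theorem FN_jstat (p k : ℕ) (hp : 1 ≤ p) (π : Finset (ℕ × ℕ)) (hπ : π ∈ NCset p 0 k) (l : Fin (p+1)) :
    jstat p 0 π l = (π.filter fun b => Fin.ofNat (p+1) (FNidx (labelW p 0 b.2)) = l).card := by
  classical
  unfold jstat
  rw [← card_union_of_disjoint]
  · congr 1
    ext b
    rw [mem_union, mem_filter, mem_filter, mem_filter, ← and_or_left]
    apply and_congr_right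
    intro hb
    rw [FN_NCset, mem_FNset] at hπ
    have := hπ.1 b hb
    obtain ⟨l', h1, h2, h | h⟩ := FN_letter p b.2 hp (by omega)
    · rw [h, Fin.ext_iff]
      simp only [FNidx, Prod.mk.injEq, Fin.ofNat]
      simp
      rw [Nat.mod_eq_of_lt (by omega)]
      omega
    · rw [h, Fin.ext_iff]
      simp only [FNidx, Prod.mk.injEq, Fin.ofNat]
      simp
      rw [Nat.mod_eq_of_lt (by omega)]
  · rw [disjoint_left]
    intro b hb hb'
    rw [mem_filter] at hb hb'
    rw [hb.2] at hb'
    simp at hb'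

theorem FN_weight (p k : ℕ) (hp : 1 ≤ p) (π : Finset (ℕ × ℕ)) (hπ : π ∈ NCset p 0 k) :
    ∏ b ∈ π, FNwt p (FNd p) b.2 =
      MvPolynomial.monomial (Finsupp.equivFunOnFinite.symm (fun l : Fin (p+1) => jstat p 0 π l))
        (1 : ℚ) := by
  classical
  rw [MvPolynomial.monomial_eq, Finsupp.prod_fintype _ _ (by simp), map_one, one_mul]
  simp only [Finsupp.equivFunOnFinite_symm_apply_apply]
  unfold FNwt FNd
  rw [← Finset.prod_fiberwise π (fun b => Fin.ofNat (p+1) (FNidx (labelW p 0 b.2)))]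
  refine prod_congr rfl fun l _ => ?_
  rw [FN_jstat p k hp π hπ l]
  apply Finset.prod_eq_pow_card
  intro b hb
  rw [(mem_filter.1 hb).2]

theorem FN_Ncount (p k : ℕ) (hp : 1 ≤ p) (j : Fin (p+1) → ℕ) :
    MvPolynomial.coeff (Finsupp.equivFunOnFinite.symm j) (FNS p (FNd p) 1 (2 * p * k + 1))
      = (Ncount p 0 k j : ℚ) := by
  classical
  unfold FNS FNsum
  rw [← FN_NCset, sum_congr rfl (fun π hπ => FN_weight p k hp π hπ), MvPolynomial.coeff_sum]
  simp only [MvPolynomial.coeff_monomial]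
  unfold Ncount
  rw [card_filter]
  push_cast
  refine sum_congr rfl fun π _ => ?_
  congr 1
  rw [Equiv.apply_eq_iff_eq, funext_iff]

end FNMain

theorem FN_U (p : ℕ) (hp : 1 ≤ p) :
    PowerSeries.X * (PowerSeries.C (FNd p 0) * FNF p (FNd p) 0) = PowerSeries.X *
      Polynomial.aeval (PowerSeries.X * (PowerSeries.C (FNd p 0) * FNF p (FNd p) 0))
        (∏ l : Fin (p+1), (Polynomial.C (MvPolynomial.X l : MvPolynomial (Fin (p+1)) ℚ)
          + Polynomial.X)) := by
  congr 1
  conv_lhs => rw [FN_funeq p hp]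
  rw [map_prod, Finset.prod_range]
  refine Finset.prod_congr rfl fun l _ => ?_
  rw [map_add, Polynomial.aeval_X, Polynomial.aeval_C]
  congr 1
  have : Fin.ofNat (p+1) (l : ℕ) = l := by
    ext; simp
  rw [FNd, this]
  rfl

/-- The coefficients of `P_k` are generalized Fuss–Narayana numbers: for `p, k ≥ 1`
and nonnegative `j₀ + j₁ + ⋯ + j_p = pk`,
`k · N₀(k, (j₀, …, j_p)) = C(k, j₀+1) · C(k, j₁) ⋯ C(k, j_p)`. -/
theorem Ncount_zero_eq_fussNarayana (p k : ℕ) (hp : 1 ≤ p) (hk : 1 ≤ k)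
    (j : Fin (p + 1) → ℕ) (hj : ∑ l, j l = p * k) :
    k * Ncount p 0 k j =
      Nat.choose k (j 0 + 1) * ∏ l : Fin p, Nat.choose k (j l.succ) := by
  have hL := FN_lagrange _ _ (FN_U p hp) k 1 le_rfl hk
  obtain ⟨k, rfl⟩ : ∃ k', k = k' + 1 := ⟨k - 1, by omega⟩
  rw [pow_one, PowerSeries.coeff_succ_X_mul, PowerSeries.coeff_C_mul, Nat.cast_one, one_mul] at hL
  have hF : PowerSeries.coeff k (FNF p (FNd p) 0) = FNS p (FNd p) 1 (2 * p * (k+1) + 1) := by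
    rw [FNF, PowerSeries.coeff_mk]
    congr 1
  rw [hF] at hL
  set s : Fin (p+1) →₀ ℕ := Finsupp.equivFunOnFinite.symm j with hs
  have hsl : ∀ l, s l = j l := fun l => by rw [hs]; simp
  have hc := congrArg (MvPolynomial.coeff (s + Finsupp.single 0 1)) hL
  have h0 : FNd p 0 = MvPolynomial.X 0 := rfl
  rw [FN_coeff] at hc
  · rw [h0, show ((k + 1 : ℕ) : MvPolynomial (Fin (p+1)) ℚ) = MvPolynomial.C ((k+1 : ℕ) : ℚ) by simp,
      MvPolynomial.coeff_C_mul, add_comm s, MvPolynomial.coeff_X_mul, FN_Ncount p _ hp,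
      Fin.prod_univ_succ] at hc
    have h1 : (Finsupp.single (0 : Fin (p+1)) 1 + s : Fin (p+1) →₀ ℕ) 0 = j 0 + 1 := by
      simp [hsl, add_comm]
    have h2 : ∀ l : Fin p, (Finsupp.single (0 : Fin (p+1)) 1 + s : Fin (p+1) →₀ ℕ) l.succ = j l.succ := by
      intro l
      simp [hsl]
    simp only [h1, h2] at hc
    exact_mod_cast hc
  · simp only [Finsupp.add_apply, Finset.sum_add_distrib, hsl, hj]
    have : ∑ x : Fin (p+1), (Finsupp.single (0 : Fin (p+1)) 1) x = 1 := by
      simp [Finsupp.single_apply]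
    rw [this]
    simp only [Nat.add_sub_cancel]
    ring
end

section
/- For all integers p ≥ 1 and k ≥ 1, the number of noncrossing pair partitions of {1,...,2pk} adapted to W_0^k is the Fuss-Catalan number: (pk + 1) · |NC²_{2pk}(W_0^k)| = C((p+1)k, k). -/
/-- Partial noncrossing pairings: open points `s`, next position `m`. -/
def GoodP (N : ℕ) (Q : ℕ → ℕ → Prop) (s : List ℕ) (m : ℕ) (π : Finset (ℕ × ℕ)) : Prop :=
  (∀ b ∈ π, (b.1 ∈ s ∨ m ≤ b.1) ∧ m ≤ b.2 ∧ b.2 ≤ N ∧ b.1 < b.2) ∧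
  (∀ x, (x ∈ s ∨ (m ≤ x ∧ x ≤ N)) → ∃ b ∈ π, x = b.1 ∨ x = b.2) ∧
  (∀ b ∈ π, ∀ c ∈ π, (b.1 = c.1 ∨ b.1 = c.2 ∨ b.2 = c.1 ∨ b.2 = c.2) → b = c) ∧
  (∀ b ∈ π, ∀ c ∈ π, ¬(b.1 < c.1 ∧ c.1 < b.2 ∧ b.2 < c.2)) ∧
  (∀ b ∈ π, Q b.1 b.2)

open Classical in
noncomputable def PS (N : ℕ) (Q : ℕ → ℕ → Prop) (s : List ℕ) (m : ℕ) :
    Finset (Finset (ℕ × ℕ)) :=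
  (Finset.range (N + 1) ×ˢ Finset.range (N + 1)).powerset.filter (GoodP N Q s m)

theorem mem_PS {N : ℕ} {Q : ℕ → ℕ → Prop} {s : List ℕ} {m : ℕ} {π : Finset (ℕ × ℕ)} :
    π ∈ PS N Q s m ↔ GoodP N Q s m π := by
  classical
  unfold PS
  rw [Finset.mem_filter, Finset.mem_powerset]
  refine ⟨fun h => h.2, fun h => ⟨?_, h⟩⟩
  intro b hb
  have := h.1 b hb
  simp only [Finset.mem_product, Finset.mem_range]
  omega

theorem GoodP_push {N : ℕ} {Q : ℕ → ℕ → Prop} {s : List ℕ} {m : ℕ} {π : Finset (ℕ × ℕ)}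
    (hs : ∀ x ∈ s, x < m) (hm : m ≤ N) :
    GoodP N Q (m :: s) (m + 1) π ↔ GoodP N Q s m π ∧ ¬ ∃ b ∈ π, b.2 = m := by
  constructor
  · rintro ⟨h1, h2, h3, h4, h5⟩
    refine ⟨⟨?_, ?_, h3, h4, h5⟩, ?_⟩
    · intro b hb
      obtain ⟨h, h', hc, hd⟩ := h1 b hb
      refine ⟨?_, by omega, hc, hd⟩
      rcases h with h | h
      · rcases List.mem_cons.1 h with h | h
        · right; omega
        · left; exact h
      · right; omega
    · intro x hx
      apply h2
      rcases hx with hx | hx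
      · left; exact List.mem_cons_of_mem _ hx
      · by_cases hxm : x = m
        · left; simp [hxm]
        · right; omega
    · rintro ⟨b, hb, hbm⟩
      have := h1 b hb
      omega
  · rintro ⟨⟨h1, h2, h3, h4, h5⟩, hno⟩
    refine ⟨?_, ?_, h3, h4, h5⟩
    · intro b hb
      obtain ⟨h, h', hc, hd⟩ := h1 b hb
      have : b.2 ≠ m := fun e => hno ⟨b, hb, e⟩
      refine ⟨?_, by omega, hc, hd⟩
      rcases h with h | h
      · left; exact List.mem_cons_of_mem _ h
      · by_cases e : b.1 = m
        · left; simp [e]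
        · right; omega
    · intro x hx
      apply h2
      rcases hx with hx | hx
      · rcases List.mem_cons.1 hx with h | h
        · right; omega
        · left; exact h
      · right; omega

theorem GoodP_top {N : ℕ} {Q : ℕ → ℕ → Prop} {s : List ℕ} {t m : ℕ} {π : Finset (ℕ × ℕ)}
    (hs : ∀ x ∈ t :: s, x < m) (hst : ∀ x ∈ s, x < t)
    (h : GoodP N Q (t :: s) m π) {b : ℕ × ℕ} (hb : b ∈ π) (hbm : b.2 = m) : b = (t, m) := by
  obtain ⟨h1, h2, h3, h4, h5⟩ := h
  have hb1 := h1 b hb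
  have : b.1 ∈ t :: s := by
    rcases hb1.1 with h | h
    · exact h
    · omega
  rcases List.mem_cons.1 this with e | e
  · ext <;> simp [e, hbm]
  · exfalso
    have hlt := hst _ e
    have htm := hs t (by simp)
    obtain ⟨c, hc, hc'⟩ := h2 t (Or.inl (by simp))
    have hc1 := h1 c hc
    rcases hc' with e' | e'
    · by_cases hcm : c.2 = m
      · have := h3 b hb c hc (by omega)
        subst this; omega
      · exact h4 b hb c hc (by omega)
    · omega

theorem GoodP_pop {N : ℕ} {Q : ℕ → ℕ → Prop} {s : List ℕ} {t m : ℕ} {π : Finset (ℕ × ℕ)}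
    (hs : ∀ x ∈ t :: s, x < m) (hst : ∀ x ∈ s, x < t)
    (h : GoodP N Q (t :: s) m π) (hb : (t, m) ∈ π) : GoodP N Q s (m + 1) (π.erase (t, m)) := by
  have htop := fun b hb hbm => GoodP_top hs hst h (b := b) hb hbm
  obtain ⟨h1, h2, h3, h4, h5⟩ := h
  have htm := hs t (by simp)
  refine ⟨?_, ?_, ?_, ?_, ?_⟩
  · intro b hb'
    rw [Finset.mem_erase] at hb'
    obtain ⟨g, g', gc, gd⟩ := h1 b hb'.2
    have n1 : b.2 ≠ m := fun e => hb'.1 (htop b hb'.2 e)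
    have n2 : b.1 ≠ t := fun e => hb'.1 (h3 b hb'.2 _ hb (Or.inl e))
    have n3 : b.1 ≠ m := fun e => hb'.1 (h3 b hb'.2 _ hb (Or.inr (Or.inl e)))
    refine ⟨?_, by omega, gc, gd⟩
    rcases g with g | g
    · rcases List.mem_cons.1 g with e | e
      · exact absurd e n2
      · exact Or.inl e
    · right; omega
  · intro x hx
    have hxt : x ≠ t := by
      rcases hx with hx | hx
      · have := hst x hx; omega
      · omega
    have hxm : x ≠ m := by
      rcases hx with hx | hx
      · have := hs x (by simp [hx]); omega
      · omega
    obtain ⟨b, hb', hbx⟩ := h2 x (by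
      rcases hx with hx | hx
      · left; simp [hx]
      · right; omega)
    refine ⟨b, Finset.mem_erase.2 ⟨?_, hb'⟩, hbx⟩
    rintro rfl
    rcases hbx with e | e
    · exact hxt e
    · exact hxm e
  · intro b hb c hc
    exact h3 b (Finset.mem_of_mem_erase hb) c (Finset.mem_of_mem_erase hc)
  · intro b hb c hc
    exact h4 b (Finset.mem_of_mem_erase hb) c (Finset.mem_of_mem_erase hc)
  · intro b hb
    exact h5 b (Finset.mem_of_mem_erase hb)

theorem GoodP_unpop {N : ℕ} {Q : ℕ → ℕ → Prop} {s : List ℕ} {t m : ℕ} {π : Finset (ℕ × ℕ)}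
    (hs : ∀ x ∈ t :: s, x < m) (hst : ∀ x ∈ s, x < t) (hm : m ≤ N) (hQ : Q t m)
    (h : GoodP N Q s (m + 1) π) : GoodP N Q (t :: s) m (insert (t, m) π) ∧ (t, m) ∉ π := by
  obtain ⟨h1, h2, h3, h4, h5⟩ := h
  have htm := hs t (by simp)
  -- every old block avoids t and m
  have av : ∀ b ∈ π, b.1 ≠ t ∧ b.1 ≠ m ∧ m < b.2 ∧ (b.1 < t ∨ m < b.1) := by
    intro b hb
    obtain ⟨g, g', -, -⟩ := h1 b hb
    rcases g with g | g
    · have := hst _ g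
      omega
    · omega
  refine ⟨⟨?_, ?_, ?_, ?_, ?_⟩, ?_⟩
  · intro b hb
    rcases Finset.mem_insert.1 hb with rfl | hb
    · refine ⟨Or.inl (by simp), le_refl _, hm, htm⟩
    · obtain ⟨g, g', gc, gd⟩ := h1 b hb
      refine ⟨?_, by omega, gc, gd⟩
      rcases g with g | g
      · left; simp [g]
      · right; omega
  · intro x hx
    by_cases hxt : x = t
    · exact ⟨(t, m), by simp, Or.inl hxt⟩
    by_cases hxm : x = m
    · exact ⟨(t, m), by simp, Or.inr hxm⟩
    obtain ⟨b, hb, hbx⟩ := h2 x (by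
      rcases hx with hx | hx
      · rcases List.mem_cons.1 hx with e | e
        · exact absurd e hxt
        · exact Or.inl e
      · right; omega)
    exact ⟨b, Finset.mem_insert_of_mem hb, hbx⟩
  · intro b hb c hc
    rcases Finset.mem_insert.1 hb with rfl | hb <;> rcases Finset.mem_insert.1 hc with rfl | hc
    · intro _; rfl
    · have := av c hc
      intro h; exfalso; simp only at h; omega
    · have := av b hb
      intro h; exfalso; simp only at h; omega
    · exact h3 b hb c hc
  · intro b hb c hc
    rcases Finset.mem_insert.1 hb with rfl | hb <;> rcases Finset.mem_insert.1 hc with rfl | hc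
    · intro h; simp only at h; omega
    · have := av c hc
      intro h; simp only at h; omega
    · have := av b hb
      intro h; simp only at h; omega
    · exact h4 b hb c hc
  · intro b hb
    rcases Finset.mem_insert.1 hb with rfl | hb
    · exact hQ
    · exact h5 b hb
  · intro hb
    exact (av _ hb).1 rfl

open Classical in
theorem card_PS_nil {N : ℕ} {Q : ℕ → ℕ → Prop} {m : ℕ} (hm : m ≤ N) :
    (PS N Q [] m).card = (PS N Q [m] (m + 1)).card := by
  congr 1
  ext π
  rw [mem_PS, mem_PS, GoodP_push (by simp) hm]
  refine ⟨fun h => ⟨h, ?_⟩, fun h => h.1⟩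
  rintro ⟨b, hb, e⟩
  have := h.1 b hb
  simp only [List.not_mem_nil, false_or] at this
  omega

open Classical in
theorem card_PS_cons {N : ℕ} {Q : ℕ → ℕ → Prop} {s : List ℕ} {t m : ℕ}
    (hs : ∀ x ∈ t :: s, x < m) (hst : ∀ x ∈ s, x < t) (hm : m ≤ N) :
    (PS N Q (t :: s) m).card = (PS N Q (m :: t :: s) (m + 1)).card +
      (if Q t m then (PS N Q s (m + 1)).card else 0) := by
  rw [← Finset.card_filter_add_card_filter_not (s := PS N Q (t :: s) m)
    (fun π => ∃ b ∈ π, b.2 = m), add_comm]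
  congr 1
  · congr 1
    ext π
    rw [Finset.mem_filter, mem_PS, mem_PS, GoodP_push hs hm]
  · split_ifs with hQ
    · refine Finset.card_bij' (fun π _ => π.erase (t, m)) (fun π _ => insert (t, m) π) ?_ ?_ ?_ ?_
      · intro π hπ
        rw [Finset.mem_filter, mem_PS] at hπ
        obtain ⟨h, b, hb, e⟩ := hπ
        have := GoodP_top hs hst h hb e
        subst this
        exact mem_PS.2 (GoodP_pop hs hst h hb)
      · intro π hπ
        rw [mem_PS] at hπ
        rw [Finset.mem_filter, mem_PS]
        exact ⟨(GoodP_unpop hs hst hm hQ hπ).1, (t, m), by simp, rfl⟩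
      · intro π hπ
        rw [Finset.mem_filter, mem_PS] at hπ
        obtain ⟨h, b, hb, e⟩ := hπ
        have := GoodP_top hs hst h hb e
        subst this
        exact Finset.insert_erase hb
      · intro π hπ
        rw [mem_PS] at hπ
        exact Finset.erase_insert (GoodP_unpop hs hst hm hQ hπ).2
    · rw [Finset.card_eq_zero, Finset.filter_eq_empty_iff]
      rintro π hπ ⟨b, hb, e⟩
      rw [mem_PS] at hπ
      have := GoodP_top hs hst hπ hb e
      subst this
      exact hQ (hπ.2.2.2.2 _ hb)

theorem card_PS_end_cons {N : ℕ} {Q : ℕ → ℕ → Prop} {s : List ℕ} {t : ℕ} (ht : t < N + 1) :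
    (PS N Q (t :: s) (N + 1)).card = 0 := by
  rw [Finset.card_eq_zero, Finset.eq_empty_iff_forall_notMem]
  intro π hπ
  rw [mem_PS] at hπ
  obtain ⟨b, hb, -⟩ := hπ.2.1 t (Or.inl (by simp))
  have := hπ.1 b hb
  omega

theorem card_PS_end_nil {N : ℕ} {Q : ℕ → ℕ → Prop} :
    (PS N Q [] (N + 1)).card = 1 := by
  rw [Finset.card_eq_one]
  refine ⟨∅, ?_⟩
  ext π
  rw [mem_PS, Finset.mem_singleton]
  constructor
  · intro h
    rw [Finset.eq_empty_iff_forall_notMem]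
    intro b hb
    have := h.1 b hb
    omega
  · rintro rfl
    refine ⟨by simp, ?_, by simp, by simp, by simp⟩
    intro x hx
    simp only [List.not_mem_nil, false_or] at hx
    omega

/-- Counting completions by a stack of letters. -/
noncomputable def cntS {α : Type} (M : α → α → Prop) (L : ℕ → α) : ℕ → ℕ → List α → ℕ
  | 0, _, [] => 1
  | 0, _, _ :: _ => 0
  | n + 1, m, [] => cntS M L n (m + 1) [L m]
  | n + 1, m, t :: s => cntS M L n (m + 1) (L m :: t :: s) +
      (open Classical in if M t (L m) then cntS M L n (m + 1) s else 0)

theorem card_PS_eq_cntS {α : Type} (M : α → α → Prop) (L : ℕ → α) (N : ℕ) :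
    ∀ (n m : ℕ) (s : List ℕ), m + n = N + 1 → (∀ x ∈ s, x < m) → s.Pairwise (· > ·) →
    (PS N (fun a b => M (L a) (L b)) s m).card = cntS M L n m (s.map L) := by
  intro n
  induction n with
  | zero =>
    intro m s hm hs hp
    obtain rfl : m = N + 1 := by omega
    cases s with
    | nil => rw [card_PS_end_nil]; simp [cntS]
    | cons t s => rw [card_PS_end_cons (hs t (by simp))]; simp [cntS]
  | succ n ih =>
    intro m s hm hs hp
    cases s with
    | nil =>
      rw [card_PS_nil (by omega), ih (m + 1) [m] (by omega) (by simp) (by simp)]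
      simp [cntS]
    | cons t s =>
      have hst := (List.pairwise_cons.1 hp).1
      rw [card_PS_cons hs hst (by omega), ih (m + 1) (m :: t :: s) (by omega)
        (by
          intro x hx
          rcases List.mem_cons.1 hx with e | e
          · omega
          · have := hs x e; omega)
        (List.pairwise_cons.2 ⟨fun x hx => hs x hx, hp⟩),
        ih (m + 1) s (by omega) (fun x hx => by have := hs x (by simp [hx]); omega)
          (List.pairwise_cons.1 hp).2]
      simp [cntS]

/-- Raney numbers by recursion. -/
def raney (p : ℕ) : ℕ → ℕ → ℕ
  | 0, _ => 1
  | _ + 1, 0 => 0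
  | k + 1, r + 1 => raney p (k + 1) r + raney p k (r + 1 + p)

/-- Greedy completion: `g` steps, `r` pops. -/
inductive Greedy {α : Type} (M : α → α → Prop) (L : ℕ → α) (P : ℕ) :
    ℕ → List α → ℕ → ℕ → Prop
  | nil (m : ℕ) (h : m % P = 1 % P) : Greedy M L P m [] 0 0
  | pop (m : ℕ) (t : α) (s : List α) (g r : ℕ) (h : M t (L m))
      (hg : Greedy M L P (m + 1) s g r) : Greedy M L P m (t :: s) (g + 1) (r + 1)
  | push (m : ℕ) (t : α) (s : List α) (g r : ℕ) (h : ¬ M t (L m))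
      (hg : Greedy M L P (m + 1) (L m :: t :: s) g r) : Greedy M L P m (t :: s) (g + 1) r

theorem Greedy.shift {α : Type} {M : α → α → Prop} {L : ℕ → α} {P : ℕ}
    (hL : ∀ m, 1 ≤ m → L (m + P) = L m) {m : ℕ} {s : List α} {g r : ℕ} (hm : 1 ≤ m)
    (h : Greedy M L P m s g r) : Greedy M L P (m + P) s g r := by
  induction h with
  | nil m h => exact Greedy.nil _ (by rw [Nat.add_mod_right]; exact h)
  | pop m t s g r h hg ih =>
    refine Greedy.pop _ _ _ _ _ (by rwa [hL m hm]) ?_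
    have := ih (by omega)
    rwa [show m + P + 1 = m + 1 + P by omega]
  | push m t s g r h hg ih =>
    refine Greedy.push _ _ _ _ _ (by rwa [hL m hm]) ?_
    have := ih (by omega)
    rwa [show m + P + 1 = m + 1 + P by omega, hL m hm]

theorem cntS_eq {α : Type} {M : α → α → Prop} {L : ℕ → α} {p : ℕ} (hp : 1 ≤ p)
    (h0 : ∀ m, 1 ≤ m → m % (2 * p) = 1 % (2 * p) →
      Greedy M L (2 * p) (m + 1) [L m] (2 * p - 1) p)
    (h1 : ∀ m t s g r, 1 ≤ m → M t (L m) → Greedy M L (2 * p) m (t :: s) g r →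
      Greedy M L (2 * p) (m + 1) (L m :: t :: s) (g + 2 * p - 1) (r + p)) :
    ∀ n m s g r, 1 ≤ m → Greedy M L (2 * p) m s g r →
      (n < g → cntS M L n m s = 0) ∧
      (∀ k, n = g + 2 * p * k → cntS M L n m s = raney p k (r + 1)) := by
  intro n
  induction n with
  | zero =>
    intro m s g r hm h
    cases h with
    | nil _ h =>
      refine ⟨by omega, fun k hk => ?_⟩
      have : k = 0 := by
        rcases Nat.eq_zero_or_pos k with h | h
        · exact h
        · have : 0 < 2 * p * k := by positivity
          omega
      subst this
      simp [cntS, raney]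
    | pop => exact ⟨fun _ => by simp [cntS], fun k hk => by omega⟩
    | push => exact ⟨fun _ => by simp [cntS], fun k hk => by omega⟩
  | succ n ih =>
    intro m s g r hm h
    cases h with
    | nil _ h =>
      refine ⟨by omega, fun k hk => ?_⟩
      cases k with
      | zero => omega
      | succ k =>
        have := (ih (m + 1) [L m] (2 * p - 1) p (by omega) (h0 m hm h)).2 k
          (by rw [mul_add] at hk; omega)
        simp [cntS, raney, this, add_comm]
    | pop _ t s g r ht hg =>
      have hg' := h1 m t s _ _ hm ht (Greedy.pop m t s g r ht hg)
      have A := ih (m + 1) _ _ _ (by omega) hg'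
      have B := ih (m + 1) _ _ _ (by omega) hg
      constructor
      · intro hn
        simp [cntS, A.1 (by omega), B.1 (by omega)]
      · intro k hk
        have hB := B.2 k (by omega)
        cases k with
        | zero => simp [cntS, A.1 (by omega), hB, ht, raney]
        | succ k =>
          have hA := A.2 k (by rw [mul_add] at hk; omega)
          simp only [cntS, hA, hB, ht, if_true, raney]
          rw [show r + 1 + p + 1 = r + 1 + 1 + p by omega]
          ring
    | push _ t s g r ht hg =>
      have A := ih (m + 1) _ _ _ (by omega) hg
      constructor
      · intro hn
        simp [cntS, A.1 (by omega), ht]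
      · intro k hk
        simp [cntS, A.2 k (by omega), ht]

theorem raney_eq (p : ℕ) : ∀ k r : ℕ, (raney p (k + 1) r : ℤ) + p * ((p + 1) * (k + 1) + r - 1).choose k
    = ((p + 1) * (k + 1) + r - 1).choose (k + 1) := by
  intro k
  induction k with
  | zero =>
    intro r
    induction r with
    | zero => simp [raney]
    | succ r ih =>
      have e1 : (p + 1) * (0 + 1) + r - 1 = p + r := by simp
      have e2 : (p + 1) * (0 + 1) + (r + 1) - 1 = p + r + 1 := by simp; omega
      rw [e1] at ih
      rw [e2]
      simp [raney] at ih ⊢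
      linarith
  | succ k ihk =>
    intro r
    induction r with
    | zero =>
      simp only [raney]
      have e : (p + 1) * (k + 1 + 1) + 0 - 1 = (p * (k + 2)) + (k + 1) := by
        have : (p + 1) * (k + 1 + 1) = p * (k + 2) + k + 2 := by ring
        omega
      rw [e]
      have := Nat.choose_succ_right_eq (p * (k + 2) + (k + 1)) (k + 1)
      rw [Nat.add_sub_cancel] at this
      have h2 : (((p * (k + 2) + (k + 1)).choose (k + 1 + 1) : ℕ) : ℤ) * (k + 2)
        = ((p * (k + 2) + (k + 1)).choose (k + 1) : ℕ) * (p * (k + 2)) := by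
        exact_mod_cast this
      have h3 : ((k : ℤ) + 2) ≠ 0 := by positivity
      apply mul_right_cancel₀ h3
      rw [h2]
      push_cast
      ring
    | succ r ih =>
      simp only [raney]
      have hk := ihk (r + 1 + p)
      obtain ⟨n, hn⟩ : ∃ n, n = (p + 1) * (k + 1 + 1) + r - 1 := ⟨_, rfl⟩
      have e0 : (p + 1) * (k + 1 + 1) = (p + 1) * (k + 1) + p + 1 := by ring
      rw [← hn] at ih
      rw [show (p + 1) * (k + 1) + (r + 1 + p) - 1 = n by omega] at hk
      rw [show (p + 1) * (k + 1 + 1) + (r + 1) - 1 = n + 1 by omega]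
      rw [Nat.choose_succ_succ n k, Nat.choose_succ_succ n (k + 1)]
      push_cast
      linarith

theorem raney_one (p k : ℕ) (hk : 1 ≤ k) :
    (p * k + 1) * raney p k 1 = ((p + 1) * k).choose k := by
  obtain ⟨k, rfl⟩ : ∃ j, k = j + 1 := ⟨k - 1, by omega⟩
  have h := raney_eq p k 1
  rw [Nat.add_sub_cancel] at h
  have e : (p + 1) * (k + 1) = p * (k + 1) + 1 + k := by ring
  have h2 := Nat.choose_succ_right_eq ((p + 1) * (k + 1)) k
  rw [show (p + 1) * (k + 1) - k = p * (k + 1) + 1 by omega] at h2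
  have h3 : ((((p + 1) * (k + 1)).choose (k + 1) : ℕ) : ℤ) * (k + 1)
        = (((p + 1) * (k + 1)).choose k : ℕ) * (p * (k + 1) + 1) := by exact_mod_cast h2
  zify
  generalize (((p + 1) * (k + 1)).choose (k + 1) : ℕ) = X at *
  generalize (((p + 1) * (k + 1)).choose k : ℕ) = Y at *
  have h4 : (raney p (k + 1) 1 : ℤ) = X - p * Y := by linarith
  rw [h4]
  have h5 : ((p : ℤ) * (k + 1) + 1) * (X - p * Y) - X = p * (X * (k + 1) - Y * (p * (k + 1) + 1)) := by ring
  rw [h3, sub_self, mul_zero] at h5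
  linarith

/-- Matching of letters. -/
def MM (p : ℕ) (x y : ℕ × Bool) : Prop :=
  ∃ l, 1 ≤ l ∧ l ≤ p ∧ ((x = (l, false) ∧ y = (l, true)) ∨ (x = (l, true) ∧ y = (l, false)))

theorem labelW_up {p m h : ℕ} (hh : h < p) (hm : m % (2 * p) = h) :
    labelW p 0 (m + 1) = (h + 1, false) := by
  unfold labelW letter0
  simp only [Nat.add_sub_cancel, Nat.sub_zero, Nat.add_mod_right, hm]
  rw [if_pos (by omega)]

theorem labelW_down {p m h : ℕ} (h0 : 1 ≤ h) (hh : h ≤ p) (hm : m % (2 * p) = 2 * p - h) :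
    labelW p 0 (m + 1) = (h, true) := by
  unfold labelW letter0
  simp only [Nat.add_sub_cancel, Nat.sub_zero, Nat.add_mod_right, hm]
  rw [if_neg (by omega)]
  congr 1
  omega

theorem labelW_shift {p m : ℕ} (hm : 1 ≤ m) : labelW p 0 (m + 2 * p) = labelW p 0 m := by
  unfold labelW
  rw [show m + 2 * p - 1 + (2 * p - 0) = (m - 1 + (2 * p - 0)) + 2 * p by omega,
    Nat.add_mod_right]

theorem mod_step {P m a b : ℕ} (h : m % P = a) (hab : a + b < P) : (m + b) % P = a + b := by
  subst h
  rw [Nat.add_mod, Nat.mod_eq_of_lt (show b < P by omega), Nat.mod_eq_of_lt hab]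

theorem mod_wrap {P m a b c : ℕ} (h : m % P = a) (hab : a + b = P + c) (hc : c < P)
    (ha : a < P) : (m + b) % P = c := by
  subst h
  rw [← Nat.mod_add_mod, hab, Nat.add_mod_left, Nat.mod_eq_of_lt hc]

theorem greedy_up {p : ℕ} : ∀ d h m : ℕ, h + d = p → m % (2 * p) = h → 1 ≤ d + h →
    ∀ t s g r, (d ≠ 0 → t ≠ (h + 1, true)) →
    Greedy (MM p) (labelW p 0) (2 * p) (m + 1 + 2 * d) (t :: s) g r →
    Greedy (MM p) (labelW p 0) (2 * p) (m + 1) (t :: s) (g + 2 * d) (r + d) := by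
  intro d
  induction d with
  | zero => intro h m _ _ _ t s g r _ hg; simpa using hg
  | succ d ih =>
    intro h m hd hm _ t s g r ht hg
    have hl := labelW_up (p := p) (m := m) (h := h) (by omega) hm
    refine Greedy.push (m + 1) t s (g + 2 * d + 1) _ ?_ ?_
    · rw [hl]
      rintro ⟨l, _, _, ⟨_, e⟩ | ⟨e, e'⟩⟩
      · simp at e
      · simp only [Prod.mk.injEq, and_true] at e'
        subst e'
        exact ht (by omega) e
    · rw [hl]
      have hm1 : (m + 1) % (2 * p) = h + 1 := mod_step hm (by omega)
      have := ih (h + 1) (m + 1) (by omega) hm1 (by omega) (h + 1, false) (t :: s) (g + 1) (r + 1)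
        (by simp) (by
          refine Greedy.pop _ _ _ _ _ ?_ ?_
          · have := labelW_down (p := p) (m := m + 1 + 2 * d) (h := h + 1) (by omega) (by omega)
              (by rw [mod_step hm1 (by omega)]; omega)
            rw [show m + 1 + 1 + 2 * d = m + 1 + 2 * d + 1 by omega, this]
            exact ⟨h + 1, by omega, by omega, Or.inl ⟨rfl, rfl⟩⟩
          · rwa [show m + 1 + 1 + 2 * d + 1 = m + 1 + 2 * (d + 1) by omega])
      rwa [show g + 1 + 2 * d = g + 2 * d + 1 by omega, show r + 1 + d = r + (d + 1) by omega] at this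

theorem greedy_down {p : ℕ} (hp : 1 ≤ p) : ∀ d m : ℕ, d ≤ p → m % (2 * p) = (2 * p - d) % (2 * p) →
    ∀ t s g r, (d ≠ 0 → t ≠ (d, false)) →
    Greedy (MM p) (labelW p 0) (2 * p) (m + 1 + 2 * d) (t :: s) g r →
    Greedy (MM p) (labelW p 0) (2 * p) (m + 1) (t :: s) (g + 2 * d) (r + d) := by
  intro d
  induction d with
  | zero => intro m _ _ t s g r _ hg; simpa using hg
  | succ d ih =>
    intro m hd hm t s g r ht hg
    rw [Nat.mod_eq_of_lt (show 2 * p - (d + 1) < 2 * p by omega)] at hm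
    have hl := labelW_down (p := p) (m := m) (h := d + 1) (by omega) (by omega) hm
    refine Greedy.push (m + 1) t s (g + 2 * d + 1) _ ?_ ?_
    · rw [hl]
      rintro ⟨l, _, _, ⟨e, e'⟩ | ⟨_, e⟩⟩
      · simp only [Prod.mk.injEq, and_true] at e'
        subst e'
        exact ht (by omega) e
      · simp at e
    · rw [hl]
      have hm1 : (m + 1) % (2 * p) = (2 * p - d) % (2 * p) := by
        rw [← Nat.mod_add_mod, hm]
        congr 1
        omega
      have := ih (m + 1) (by omega) hm1 (d + 1, true) (t :: s) (g + 1) (r + 1)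
        (by simp) (by
          refine Greedy.pop _ _ _ _ _ ?_ ?_
          · have := labelW_up (p := p) (m := m + 1 + 2 * d) (h := d) (by omega)
              (by
                rw [show m + 1 + 2 * d = m + (1 + 2 * d) by omega]
                exact mod_wrap hm (by omega) (by omega) (by omega))
            rw [show m + 1 + 1 + 2 * d = m + 1 + 2 * d + 1 by omega, this]
            exact ⟨d + 1, by omega, by omega, Or.inr ⟨rfl, rfl⟩⟩
          · rwa [show m + 1 + 1 + 2 * d + 1 = m + 1 + 2 * (d + 1) by omega])
      rwa [show g + 1 + 2 * d = g + 2 * d + 1 by omega, show r + 1 + d = r + (d + 1) by omega] at this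

theorem greedy_start {p : ℕ} (hp : 1 ≤ p) (m : ℕ) (hm : m % (2 * p) = 0) :
    Greedy (MM p) (labelW p 0) (2 * p) (m + 1 + 1) [labelW p 0 (m + 1)] (2 * p - 1) p := by
  rw [labelW_up (h := 0) (by omega) hm]
  have hm1 : (m + 1) % (2 * p) = 1 := by
    have := mod_step (b := 1) hm (by omega); omega
  have := greedy_up (p := p) (p - 1) 1 (m + 1) (by omega) hm1 (by omega) (0 + 1, false) [] 1 1
    (by simp) (by
      refine Greedy.pop _ _ _ _ _ ?_ (Greedy.nil _ ?_)
      · have := labelW_down (p := p) (m := m + 1 + 2 * (p - 1)) (h := 1) (by omega) (by omega)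
          (by rw [mod_step hm1 (by omega)]; omega)
        rw [show m + 1 + 1 + 2 * (p - 1) = m + 1 + 2 * (p - 1) + 1 by omega, this]
        exact ⟨1, by omega, by omega, Or.inl ⟨rfl, rfl⟩⟩
      · rw [show m + 1 + 1 + 2 * (p - 1) + 1 = m + 1 + 2 * p by omega, Nat.add_mod_right, hm1]
        rw [Nat.mod_eq_of_lt (by omega)])
  rwa [show 1 + 2 * (p - 1) = 2 * p - 1 by omega, show 1 + (p - 1) = p by omega] at this

theorem greedy_loop {p : ℕ} (hp : 1 ≤ p) (m : ℕ) (t : ℕ × Bool) (s : List (ℕ × Bool)) (g r : ℕ)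
    (ht : MM p t (labelW p 0 (m + 1)))
    (hg : Greedy (MM p) (labelW p 0) (2 * p) (m + 1) (t :: s) g r) :
    Greedy (MM p) (labelW p 0) (2 * p) (m + 1 + 1) (labelW p 0 (m + 1) :: t :: s)
      (g + 2 * p - 1) (r + p) := by
  have hg2 := Greedy.shift (fun m hm => labelW_shift (p := p) hm) (by omega) hg
  have hlt : m % (2 * p) < 2 * p := Nat.mod_lt _ (by omega)
  by_cases hc : m % (2 * p) < p
  · -- upward letter
    obtain ⟨h, hh⟩ : ∃ h, m % (2 * p) = h := ⟨_, rfl⟩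
    rw [hh] at hc
    rw [labelW_up hc hh] at ht ⊢
    have htt : t = (h + 1, true) := by
      obtain ⟨l, _, _, ⟨_, e⟩ | ⟨e, e'⟩⟩ := ht
      · simp at e
      · simp only [Prod.mk.injEq, and_true] at e'
        subst e'; exact e
    subst htt
    have hm1 : (m + 1) % (2 * p) = h + 1 := mod_step hh (by omega)
    have hm2 : (m + 1 + 2 * (p - (h + 1))) % (2 * p) = 2 * p - (h + 1) := by
      rw [mod_step hm1 (by omega)]; omega
    have a1 := greedy_down hp h (m + 1 + 2 * (p - (h + 1)) + 1) (by omega)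
      (by
        rw [← Nat.mod_add_mod, hm2]; congr 1; omega)
      (h + 1, true) s g r (by simp)
      (by rwa [show m + 1 + 2 * (p - (h + 1)) + 1 + 1 + 2 * h = m + 1 + 2 * p by omega])
    have a2 := Greedy.pop (M := MM p) (L := labelW p 0) (P := 2 * p)
      (m + 1 + 2 * (p - (h + 1)) + 1) (h + 1, false) _ _ _
      (by
        rw [labelW_down (by omega) (by omega) hm2]
        exact ⟨h + 1, by omega, by omega, Or.inl ⟨rfl, rfl⟩⟩) a1
    have a3 := greedy_up (p := p) (p - (h + 1)) (h + 1) (m + 1) (by omega) hm1 (by omega)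
      (h + 1, false) ((h + 1, true) :: s) _ _ (by simp)
      (by
        rw [show m + 1 + 1 + 2 * (p - (h + 1)) = m + 1 + 2 * (p - (h + 1)) + 1 by omega]
        exact a2)
    rwa [show g + 2 * h + 1 + 2 * (p - (h + 1)) = g + 2 * p - 1 by omega,
      show r + h + 1 + (p - (h + 1)) = r + p by omega] at a3
  · -- downward letter
    obtain ⟨h, hh⟩ : ∃ h, h + 1 = 2 * p - m % (2 * p) := ⟨2 * p - m % (2 * p) - 1, by omega⟩
    have hh' : m % (2 * p) = 2 * p - (h + 1) := by omega
    have hc' : h + 1 ≤ p := by omega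
    rw [labelW_down (by omega) hc' hh'] at ht ⊢
    have htt : t = (h + 1, false) := by
      obtain ⟨l, _, _, ⟨e, e'⟩ | ⟨_, e⟩⟩ := ht
      · simp only [Prod.mk.injEq, and_true] at e'
        subst e'; exact e
      · simp at e
    subst htt
    have hm1 : (m + 1) % (2 * p) = (2 * p - h) % (2 * p) := by
      rw [← Nat.mod_add_mod, hh']; congr 1; omega
    have hm2 : (m + 1 + 2 * h) % (2 * p) = h := by
      rw [show m + 1 + 2 * h = m + (1 + 2 * h) by omega]
      exact mod_wrap hh' (by omega) (by omega) (by omega)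
    have hm3 : (m + 1 + 2 * h + 1) % (2 * p) = h + 1 := mod_step hm2 (by omega)
    have a1 := greedy_up (p := p) (p - (h + 1)) (h + 1) (m + 1 + 2 * h + 1) (by omega)
      hm3 (by omega) (h + 1, false) s g r (by simp)
      (by rwa [show m + 1 + 2 * h + 1 + 1 + 2 * (p - (h + 1)) = m + 1 + 2 * p by omega])
    have a2 := Greedy.pop (M := MM p) (L := labelW p 0) (P := 2 * p)
      (m + 1 + 2 * h + 1) (h + 1, true) _ _ _
      (by
        rw [labelW_up (by omega) hm2]
        exact ⟨h + 1, by omega, by omega, Or.inr ⟨rfl, rfl⟩⟩) a1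
    have a3 := greedy_down hp h (m + 1) (by omega) hm1
      (h + 1, true) ((h + 1, false) :: s) _ _ (by simp)
      (by
        rw [show m + 1 + 1 + 2 * h = m + 1 + 2 * h + 1 by omega]
        exact a2)
    rwa [show g + 2 * (p - (h + 1)) + 1 + 2 * h = g + 2 * p - 1 by omega,
      show r + (p - (h + 1)) + 1 + h = r + p by omega] at a3

theorem NCset_eq_PS (p k : ℕ) :
    NCset p 0 k = PS (2 * p * k) (fun a b => MM p (labelW p 0 a) (labelW p 0 b)) [] 1 := by
  classical
  ext π
  rw [mem_PS]
  unfold NCset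
  rw [Finset.mem_filter, Finset.mem_powerset]
  constructor
  · rintro ⟨-, ⟨h1, h2, h3, h4⟩, h5⟩
    refine ⟨?_, ?_, h3, h4, h5⟩
    · intro b hb
      have := h1 b hb
      refine ⟨Or.inr ?_, ?_, ?_, ?_⟩ <;> omega
    · intro x hx
      simp only [List.not_mem_nil, false_or] at hx
      exact h2 x hx.1 hx.2
  · rintro ⟨h1, h2, h3, h4, h5⟩
    simp only [List.not_mem_nil, false_or] at h1 h2
    refine ⟨?_, ⟨?_, ?_, h3, h4⟩, h5⟩
    · intro b hb
      have := h1 b hb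
      simp only [Finset.mem_product, Finset.mem_Icc]
      omega
    · intro b hb
      have := h1 b hb
      omega
    · intro x hx hx'
      exact h2 x ⟨hx, hx'⟩

theorem card_NCset_eq_raney (p k : ℕ) (hp : 1 ≤ p) : (NCset p 0 k).card = raney p k 1 := by
  rw [NCset_eq_PS, card_PS_eq_cntS (MM p) (labelW p 0) (2 * p * k) (2 * p * k) 1 [] (by omega)
    (by simp) (by simp)]
  refine (cntS_eq hp ?_ ?_ (2 * p * k) 1 [] 0 0 le_rfl (Greedy.nil 1 rfl)).2 k (by omega)
  · intro m hm h
    obtain ⟨m, rfl⟩ : ∃ j, m = j + 1 := ⟨m - 1, by omega⟩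
    refine greedy_start hp m ?_
    have : m + 1 ≡ 0 + 1 [MOD 2 * p] := h
    have := Nat.ModEq.add_right_cancel' 1 this
    simpa [Nat.ModEq] using this
  · intro m t s g r hm ht hg
    obtain ⟨m, rfl⟩ : ∃ j, m = j + 1 := ⟨m - 1, by omega⟩
    exact greedy_loop hp m t s g r ht hg

/-- For `p, k ≥ 1`, the number of noncrossing pair partitions of `{1, …, 2pk}`
adapted to `W₀ᵏ` is the Fuss–Catalan number:
`(pk + 1) · |NC²₂ₚₖ(W₀ᵏ)| = C((p+1)k, k)`. -/
theorem card_NCset_fussCatalan (p k : ℕ) (hp : 1 ≤ p) (hk : 1 ≤ k) :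
    (p * k + 1) * (NCset p 0 k).card = Nat.choose ((p + 1) * k) k := by
  rw [card_NCset_eq_raney p k hp]
  exact raney_one p k hk
end

section
/- For all integers p ≥ 1, k ≥ 0, every i ∈ {1,...,p}, and every tuple (j_0, j_1, ..., j_p) of nonnegative integers, the counts of adapted noncrossing pair partitions satisfy N_i(k, (j_0 + 1, j_1, ..., j_p)) = N_0(k, (j_0, ..., j_{i-1}, j_i + 1, j_{i+1}, ..., j_p)); that is, increasing the 0-th statistic by 1 on the W_i side corresponds bijectively to increasing the i-th statistic by 1 on the W_0 side. -/
/-- One-step rotation of a block. -/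
def rotB (n : ℕ) (b : ℕ × ℕ) : ℕ × ℕ :=
  if b.2 = n then (1, b.1 + 1) else (b.1 + 1, b.2 + 1)

/-- Inverse rotation of a block. -/
def unrotB (n : ℕ) (b : ℕ × ℕ) : ℕ × ℕ :=
  if b.1 = 1 then (b.2 - 1, n) else (b.1 - 1, b.2 - 1)

lemma unrotB_rotB (n : ℕ) (b : ℕ × ℕ) (h1 : 1 ≤ b.1) :
    unrotB n (rotB n b) = b := by
  obtain ⟨a, c⟩ := b
  simp only at h1
  unfold unrotB rotB
  by_cases h : c = n
  · simp [h]
  · have : ¬ a = 0 := by omega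
    simp [h, this]

lemma rotB_unrotB (n : ℕ) (b : ℕ × ℕ) (h1 : 1 ≤ b.1) (h2 : b.2 ≤ n) (h3 : b.1 < b.2) :
    rotB n (unrotB n b) = b := by
  obtain ⟨a, c⟩ := b
  simp only at h1 h2 h3
  unfold unrotB rotB
  by_cases h : a = 1
  · simp [h]; omega
  · have : ¬ c - 1 = n := by omega
    simp [h, this]; omega

lemma isNCPP_rot (n : ℕ) (π : Finset (ℕ × ℕ)) (h : IsNCPP n π) :
    IsNCPP n (π.image (rotB n)) := by
  obtain ⟨h1, h2, h3, h4⟩ := h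
  refine ⟨?_, ?_, ?_, ?_⟩
  · simp only [Finset.forall_mem_image]
    intro b hb
    have := h1 b hb
    unfold rotB
    split_ifs <;> dsimp only <;> omega
  · intro x hx1 hx2
    simp only [Finset.exists_mem_image]
    by_cases hx : x = 1
    · obtain ⟨b, hb, hbx⟩ := h2 n (by omega) le_rfl
      have := h1 b hb
      refine ⟨b, hb, ?_⟩
      have : b.2 = n := by omega
      simp [rotB, this, hx]
    · obtain ⟨b, hb, hbx⟩ := h2 (x - 1) (by omega) (by omega)
      have := h1 b hb
      refine ⟨b, hb, ?_⟩
      unfold rotB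
      split_ifs <;> dsimp only <;> omega
  · simp only [Finset.forall_mem_image]
    intro b hb c hc hbc
    have e1 := h1 b hb
    have e2 := h1 c hc
    have := h3 b hb c hc
    rw [this ?_]
    unfold rotB at hbc
    split_ifs at hbc <;> dsimp only at hbc <;> omega
  · simp only [Finset.forall_mem_image]
    intro b hb c hc hbc
    have e1 := h1 b hb
    have e2 := h1 c hc
    have e3 := h4 c hc b hb
    have e4 := h4 b hb c hc
    have e5 : b.1 = c.2 → b.2 = c.2 := fun h => by rw [h3 b hb c hc (by tauto)]
    unfold rotB at hbc
    split_ifs at hbc <;> dsimp only at hbc <;> omega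

lemma isNCPP_unrot (n : ℕ) (π : Finset (ℕ × ℕ)) (h : IsNCPP n π) :
    IsNCPP n (π.image (unrotB n)) := by
  obtain ⟨h1, h2, h3, h4⟩ := h
  refine ⟨?_, ?_, ?_, ?_⟩
  · simp only [Finset.forall_mem_image]
    intro b hb
    have := h1 b hb
    unfold unrotB
    split_ifs <;> dsimp only <;> omega
  · intro x hx1 hx2
    simp only [Finset.exists_mem_image]
    by_cases hx : x = n
    · obtain ⟨b, hb, hbx⟩ := h2 1 (by omega) (by omega)
      have := h1 b hb
      refine ⟨b, hb, ?_⟩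
      have : b.1 = 1 := by omega
      simp [unrotB, this, hx]
    · obtain ⟨b, hb, hbx⟩ := h2 (x + 1) (by omega) (by omega)
      have := h1 b hb
      refine ⟨b, hb, ?_⟩
      unfold unrotB
      split_ifs <;> dsimp only <;> omega
  · simp only [Finset.forall_mem_image]
    intro b hb c hc hbc
    have e1 := h1 b hb
    have e2 := h1 c hc
    have := h3 b hb c hc
    rw [this ?_]
    unfold unrotB at hbc
    split_ifs at hbc <;> dsimp only at hbc <;> omega
  · simp only [Finset.forall_mem_image]
    intro b hb c hc hbc
    have e1 := h1 b hb
    have e2 := h1 c hc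
    have e3 := h4 c hc b hb
    have e4 := h4 b hb c hc
    unfold unrotB at hbc
    split_ifs at hbc <;> dsimp only at hbc <;> omega

lemma labelW_succ (p i m : ℕ) (hm : 1 ≤ m) (hi : i + 1 ≤ p) :
    labelW p (i + 1) (m + 1) = labelW p i m := by
  unfold labelW
  rw [show m + 1 - 1 + (2 * p - (i + 1)) = m - 1 + (2 * p - i) by omega]

lemma labelW_last (p i k : ℕ) (hk : 1 ≤ k) (hi : i + 1 ≤ p) :
    labelW p i (2 * p * k) = (i + 1, true) := by
  unfold labelW
  obtain ⟨k, rfl⟩ : ∃ k', k = k' + 1 := ⟨k - 1, by omega⟩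
  rw [show 2 * p * (k + 1) - 1 + (2 * p - i) = (2 * p - i - 1) + 2 * p * (k + 1) by
    have : 1 ≤ 2 * p * (k + 1) := by
      have : 0 < 2 * p * (k + 1) := by
        have : 0 < p := by omega
        positivity
      omega
    omega]
  rw [Nat.add_mul_mod_self_left, Nat.mod_eq_of_lt (by omega)]
  unfold letter0
  rw [if_neg (by omega)]
  ext <;> simp; omega

lemma labelW_first (p i : ℕ) (hi : i + 1 ≤ p) :
    labelW p (i + 1) 1 = (i + 1, true) := by
  unfold labelW
  rw [Nat.mod_eq_of_lt (by omega)]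
  unfold letter0
  rw [if_neg (by omega)]
  ext <;> simp; omega

lemma adapted_rot (p i k : ℕ) (hk : 1 ≤ k) (hi : i + 1 ≤ p) (π : Finset (ℕ × ℕ))
    (h : AdaptedNCPP p i k π) : AdaptedNCPP p (i + 1) k (π.image (rotB (2 * p * k))) := by
  refine ⟨isNCPP_rot _ _ h.1, ?_⟩
  simp only [Finset.forall_mem_image]
  intro b hb
  obtain ⟨l, hl1, hl2, hl⟩ := h.2 b hb
  have hb1 := h.1.1 b hb
  refine ⟨l, hl1, hl2, ?_⟩
  unfold rotB
  split_ifs with hc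
  · dsimp only
    rw [labelW_succ p i b.1 (by omega) hi, labelW_first p i hi]
    rw [hc, labelW_last p i k hk hi] at hl
    tauto
  · dsimp only
    rw [labelW_succ p i b.1 (by omega) hi, labelW_succ p i b.2 (by omega) hi]
    exact hl

lemma adapted_unrot (p i k : ℕ) (hk : 1 ≤ k) (hi : i + 1 ≤ p) (π : Finset (ℕ × ℕ))
    (h : AdaptedNCPP p (i + 1) k π) : AdaptedNCPP p i k (π.image (unrotB (2 * p * k))) := by
  refine ⟨isNCPP_unrot _ _ h.1, ?_⟩
  simp only [Finset.forall_mem_image]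
  intro b hb
  obtain ⟨l, hl1, hl2, hl⟩ := h.2 b hb
  have hb1 := h.1.1 b hb
  have e2 := labelW_succ p i (b.2 - 1) (by omega) hi
  rw [Nat.sub_add_cancel (by omega)] at e2
  refine ⟨l, hl1, hl2, ?_⟩
  unfold unrotB
  split_ifs with hc
  · dsimp only
    rw [hc, labelW_first p i hi] at hl
    rw [labelW_last p i k hk hi, ← e2]
    tauto
  · dsimp only
    have e1 := labelW_succ p i (b.1 - 1) (by omega) hi
    rw [Nat.sub_add_cancel (by omega)] at e1
    rw [← e1, ← e2]
    exact hl

lemma mem_NCset (p i k : ℕ) (π : Finset (ℕ × ℕ)) :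
    π ∈ NCset p i k ↔ AdaptedNCPP p i k π := by
  classical
  unfold NCset
  rw [Finset.mem_filter, Finset.mem_powerset]
  refine ⟨fun h => h.2, fun h => ⟨?_, h⟩⟩
  intro b hb
  have := h.1.1 b hb
  rw [Finset.mem_product, Finset.mem_Icc, Finset.mem_Icc]
  omega

lemma unrot_rot (n : ℕ) (π : Finset (ℕ × ℕ)) (h : IsNCPP n π) :
    (π.image (rotB n)).image (unrotB n) = π := by
  rw [Finset.image_image]
  conv_rhs => rw [← Finset.image_id (s := π)]
  apply Finset.image_congr
  intro b hb
  exact unrotB_rotB n b (h.1 b hb).1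

lemma rot_unrot (n : ℕ) (π : Finset (ℕ × ℕ)) (h : IsNCPP n π) :
    (π.image (unrotB n)).image (rotB n) = π := by
  rw [Finset.image_image]
  conv_rhs => rw [← Finset.image_id (s := π)]
  apply Finset.image_congr
  intro b hb
  have := h.1 b hb
  exact rotB_unrotB n b this.1 this.2.1 this.2.2

lemma jstat_sum (p i : ℕ) (π : Finset (ℕ × ℕ)) (l : ℕ) :
    jstat p i π l = ∑ b ∈ π, ((if labelW p i b.2 = (l + 1, false) then 1 else 0) +
      (if labelW p i b.2 = (l, true) then 1 else 0)) := by
  unfold jstat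
  rw [Finset.card_filter, Finset.card_filter, Finset.sum_add_distrib]

lemma jstat_rot (p i k : ℕ) (hk : 1 ≤ k) (hi : i + 1 ≤ p) (π : Finset (ℕ × ℕ))
    (h : AdaptedNCPP p i k π) (l : ℕ) :
    jstat p (i + 1) (π.image (rotB (2 * p * k))) l + (if l = i + 1 then 1 else 0) =
      jstat p i π l + (if l = i then 1 else 0) := by
  have hn : 1 ≤ 2 * p * k := by
    have : 0 < 2 * p * k := by
      have : 0 < p := by omega
      positivity
    omega
  obtain ⟨b0, hb0, hb0n⟩ := h.1.2.1 (2 * p * k) hn le_rfl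
  have hb1 := h.1.1 b0 hb0
  have hb2 : b0.2 = 2 * p * k := by omega
  rw [jstat_sum, jstat_sum, Finset.sum_image]
  · rw [← Finset.add_sum_erase _ _ hb0, ← Finset.add_sum_erase _ _ hb0]
    have hlab1 : labelW p i b0.1 = (i + 1, false) := by
      obtain ⟨l, _, _, hl⟩ := h.2 b0 hb0
      rw [hb2, labelW_last p i k hk hi] at hl
      simp only [Prod.mk.injEq] at hl
      rcases hl with hl | hl
      · rw [hl.1, hl.2.1]
      · simp at hl
    have hrest : ∀ b ∈ π.erase b0, labelW p (i + 1) (rotB (2 * p * k) b).2 = labelW p i b.2 := by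
      intro b hb
      rw [Finset.mem_erase] at hb
      have hb3 := h.1.1 b hb.2
      have : b.2 ≠ 2 * p * k := fun he =>
        hb.1 (h.1.2.2.1 b hb.2 b0 hb0 (by omega))
      unfold rotB
      rw [if_neg this]
      exact labelW_succ p i _ (by omega) hi
    rw [Finset.sum_congr rfl (fun b hb => by rw [hrest b hb])]
    have hr0 : labelW p (i + 1) (rotB (2 * p * k) b0).2 = (i + 1, false) := by
      unfold rotB
      rw [if_pos hb2]
      rw [← hlab1]
      exact labelW_succ p i _ (by omega) hi
    rw [hr0, hb2, labelW_last p i k hk hi]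
    simp only [Prod.mk.injEq, and_true, Bool.false_eq_true, Bool.true_eq_false, and_false,
      if_false, reduceCtorEq]
    split_ifs <;> omega
  · intro b hb c hc hbc
    rw [← unrotB_rotB (2 * p * k) b (h.1.1 b hb).1, hbc,
      unrotB_rotB (2 * p * k) c (h.1.1 c hc).1]

/-- The iterated rotation on sets of blocks. -/
def rotI (n : ℕ) : ℕ → Finset (ℕ × ℕ) → Finset (ℕ × ℕ)
  | 0, π => π
  | i + 1, π => (rotI n i π).image (rotB n)

/-- The iterated inverse rotation on sets of blocks. -/
def unrotI (n : ℕ) : ℕ → Finset (ℕ × ℕ) → Finset (ℕ × ℕ)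
  | 0, π => π
  | i + 1, π => unrotI n i (π.image (unrotB n))

lemma rotI_spec (p k : ℕ) (hk : 1 ≤ k) (π : Finset (ℕ × ℕ)) (h : AdaptedNCPP p 0 k π) :
    ∀ i, i ≤ p → AdaptedNCPP p i k (rotI (2 * p * k) i π) ∧
      unrotI (2 * p * k) i (rotI (2 * p * k) i π) = π ∧
      ∀ l, jstat p i (rotI (2 * p * k) i π) l + (if l = i then 1 else 0) =
        jstat p 0 π l + (if l = 0 then 1 else 0) := by
  intro i
  induction i with
  | zero => intro _; exact ⟨h, rfl, fun l => rfl⟩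
  | succ i ih =>
    intro hi
    obtain ⟨h1, h2, h3⟩ := ih (by omega)
    refine ⟨adapted_rot p i k hk hi _ h1, ?_, ?_⟩
    · simp only [rotI, unrotI]
      rw [unrot_rot _ _ h1.1, h2]
    · intro l
      simp only [rotI]
      rw [jstat_rot p i k hk hi _ h1, h3]

lemma unrotI_spec (p k : ℕ) (hk : 1 ≤ k) :
    ∀ i, i ≤ p → ∀ π, AdaptedNCPP p i k π → AdaptedNCPP p 0 k (unrotI (2 * p * k) i π) ∧
      rotI (2 * p * k) i (unrotI (2 * p * k) i π) = π := by
  intro i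
  induction i with
  | zero => intro _ π h; exact ⟨h, rfl⟩
  | succ i ih =>
    intro hi π h
    obtain ⟨h1, h2⟩ := ih (by omega) _ (adapted_unrot p i k hk hi π h)
    refine ⟨h1, ?_⟩
    simp only [rotI, unrotI]
    rw [h2, rot_unrot _ _ h.1]

lemma adapted_zero (p i : ℕ) (π : Finset (ℕ × ℕ)) (h : AdaptedNCPP p i 0 π) : π = ∅ := by
  rw [Finset.eq_empty_iff_forall_notMem]
  intro b hb
  have := h.1.1 b hb
  simp only [mul_zero] at this
  omega

lemma Ncount_zero (p i : ℕ) (j : Fin (p + 1) → ℕ) (l : Fin (p + 1)) (hl : j l ≠ 0) :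
    Ncount p i 0 j = 0 := by
  unfold Ncount
  rw [Finset.card_eq_zero, Finset.filter_eq_empty_iff]
  intro π hπ hj
  rw [mem_NCset] at hπ
  have := hj l
  rw [adapted_zero p i π hπ] at this
  simp [jstat] at this
  exact hl this.symm

/-- For `p ≥ 1`, `k ≥ 0`, `i ∈ {1, …, p}` and any tuple `(j₀, …, j_p)` of
nonnegative integers,
`Nᵢ(k, (j₀+1, j₁, …, j_p)) = N₀(k, (j₀, …, j_{i-1}, jᵢ+1, j_{i+1}, …, j_p))`. -/
theorem Ncount_shift (p k i : ℕ) (hp : 1 ≤ p) (hi1 : 1 ≤ i) (hip : i ≤ p)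
    (j : Fin (p + 1) → ℕ) :
    Ncount p i k (Function.update j 0 (j 0 + 1)) =
      Ncount p 0 k
        (Function.update j ⟨i, by omega⟩ (j ⟨i, by omega⟩ + 1)) := by
  classical
  rcases Nat.eq_zero_or_pos k with rfl | hk
  · rw [Ncount_zero p i _ 0 (by simp), Ncount_zero p 0 _ ⟨i, by omega⟩ (by simp)]
  have key : ∀ π, AdaptedNCPP p 0 k π →
      ((∀ l : Fin (p + 1), jstat p i (rotI (2 * p * k) i π) (l : ℕ) =
          Function.update j 0 (j 0 + 1) l) ↔
        ∀ l : Fin (p + 1), jstat p 0 π (l : ℕ) =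
          Function.update j ⟨i, by omega⟩ (j ⟨i, by omega⟩ + 1) l) := by
    intro π hπ
    apply forall_congr'
    intro l
    have h3 := (rotI_spec p k hk π hπ i hip).2.2 l
    have u1 : Function.update j 0 (j 0 + 1) l = j l + (if (l : ℕ) = 0 then 1 else 0) := by
      by_cases hl : l = 0
      · subst hl; simp
      · have : (l : ℕ) ≠ 0 := fun h => hl (Fin.ext h)
        simp [hl]
    have u2 : Function.update j ⟨i, by omega⟩ (j ⟨i, by omega⟩ + 1) l =
        j l + (if (l : ℕ) = i then 1 else 0) := by
      by_cases hl : l = ⟨i, by omega⟩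
      · rw [hl]; simp
      · have : (l : ℕ) ≠ i := fun h => hl (Fin.ext h)
        simp [hl, this]
    rw [u1, u2]
    omega
  unfold Ncount
  symm
  refine Finset.card_bij' (fun π _ => rotI (2 * p * k) i π)
    (fun π _ => unrotI (2 * p * k) i π) ?_ ?_ ?_ ?_
  · intro π hπ
    rw [Finset.mem_filter, mem_NCset] at hπ ⊢
    exact ⟨(rotI_spec p k hk π hπ.1 i hip).1, (key π hπ.1).2 hπ.2⟩
  · intro π hπ
    rw [Finset.mem_filter, mem_NCset] at hπ ⊢
    have hs := unrotI_spec p k hk i hip π hπ.1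
    refine ⟨hs.1, (key _ hs.1).1 ?_⟩
    rw [hs.2]
    exact hπ.2
  · intro π hπ
    rw [Finset.mem_filter, mem_NCset] at hπ
    exact (rotI_spec p k hk π hπ.1 i hip).2.1
  · intro π hπ
    rw [Finset.mem_filter, mem_NCset] at hπ
    exact (unrotI_spec p k hk i hip π hπ.1).2
end

section
/- For all integers p ≥ 1, k ≥ 1 and every tuple (j_0,...,j_p) of nonnegative integers, the counts of adapted noncrossing pair partitions satisfy the recurrence N_0(k, (j_0, ..., j_p)) = Σ ∏_{i=0}^{p} N_i(k_i, (j_{i,0}, ..., j_{i,p})), where the sum runs over all tuples (k_0, ..., k_p) of nonnegative integers with k_0 + ... + k_p = k − 1 and all (p+1)-tuples of tuples (j_{i,0},...,j_{i,p}) ∈ ℕ^{p+1}, i = 0,...,p, such that Σ_{i=0}^{p} j_{i,0} = j_0 and Σ_{i=0}^{p} j_{i,r} = j_r − 1 for each r ∈ {1,...,p} (in particular the sum is empty if some j_r = 0 for r ≥ 1). -/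
/-- noncrossing pair partitions of the interval `[a,b)` with all blocks in `R` -/
def GoodNC (R : ℕ → ℕ → Prop) (a b : ℕ) (π : Finset (ℕ × ℕ)) : Prop :=
  (∀ x ∈ π, a ≤ x.1 ∧ x.2 < b ∧ x.1 < x.2) ∧
  (∀ x, a ≤ x → x < b → ∃ c ∈ π, x = c.1 ∨ x = c.2) ∧
  (∀ x ∈ π, ∀ c ∈ π, (x.1 = c.1 ∨ x.1 = c.2 ∨ x.2 = c.1 ∨ x.2 = c.2) → x = c) ∧
  (∀ x ∈ π, ∀ c ∈ π, ¬(x.1 < c.1 ∧ c.1 < x.2 ∧ x.2 < c.2)) ∧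
  (∀ x ∈ π, R x.1 x.2)

open Classical in
noncomputable def SNC (R : ℕ → ℕ → Prop) (a b : ℕ) : Finset (Finset (ℕ × ℕ)) :=
  (Finset.Ico a b ×ˢ Finset.Ico a b).powerset.filter (GoodNC R a b)

lemma mem_SNC {R : ℕ → ℕ → Prop} {a b : ℕ} {π : Finset (ℕ × ℕ)} :
    π ∈ SNC R a b ↔ GoodNC R a b π := by
  classical
  unfold SNC
  rw [Finset.mem_filter, Finset.mem_powerset]
  refine ⟨fun h => h.2, fun h => ⟨fun x hx => ?_, h⟩⟩
  have := h.1 x hx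
  simp only [Finset.mem_product, Finset.mem_Ico]
  omega

noncomputable def ZNC {A : Type*} [CommSemiring A] (R : ℕ → ℕ → Prop) (w : ℕ → A) (a b : ℕ) : A :=
  ∑ π ∈ SNC R a b, ∏ x ∈ π, w x.2

lemma ZNC_self {A : Type*} [CommSemiring A] (R : ℕ → ℕ → Prop) (w : ℕ → A) (a : ℕ) :
    ZNC R w a a = 1 := by
  have : SNC R a a = {∅} := by
    ext π
    rw [mem_SNC, Finset.mem_singleton]
    constructor
    · intro h
      rw [Finset.eq_empty_iff_forall_notMem]
      intro x hx
      have := h.1 x hx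
      omega
    · rintro rfl
      refine ⟨by simp, fun x h1 h2 => by omega, by simp, by simp, by simp⟩
  simp [ZNC, this]

lemma GoodNC_glue {R : ℕ → ℕ → Prop} {a b e : ℕ} {π₁ π₂ : Finset (ℕ × ℕ)}
    (h1 : a < e) (h2 : e < b) (hR : R a e)
    (g1 : GoodNC R (a+1) e π₁) (g2 : GoodNC R (e+1) b π₂) :
    GoodNC R a b (insert (a,e) (π₁ ∪ π₂)) := by
  obtain ⟨A1, B1, C1, D1, E1⟩ := g1
  obtain ⟨A2, B2, C2, D2, E2⟩ := g2
  have key : ∀ x ∈ insert (a,e) (π₁ ∪ π₂), x = (a,e) ∨ x ∈ π₁ ∨ x ∈ π₂ := by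
    intro x hx; simpa using hx
  refine ⟨?_, ?_, ?_, ?_, ?_⟩
  · intro x hx
    rcases key x hx with rfl | hx | hx
    · simp; omega
    · have := A1 x hx; omega
    · have := A2 x hx; omega
  · intro x hx hx'
    by_cases hxa : x = a
    · exact ⟨(a,e), by simp, by simp [hxa]⟩
    by_cases hxe : x = e
    · exact ⟨(a,e), by simp, by simp [hxe]⟩
    by_cases hlt : x < e
    · obtain ⟨c, hc, hh⟩ := B1 x (by omega) hlt
      exact ⟨c, by simp [hc], hh⟩
    · obtain ⟨c, hc, hh⟩ := B2 x (by omega) hx'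
      exact ⟨c, by simp [hc], hh⟩
  · intro x hx c hc hh
    rcases key x hx with rfl | hx | hx <;> rcases key c hc with rfl | hc | hc
    · rfl
    · have := A1 c hc; simp only at hh; omega
    · have := A2 c hc; simp only at hh; omega
    · have := A1 x hx; simp only at hh; omega
    · exact C1 x hx c hc hh
    · have := A1 x hx; have := A2 c hc; omega
    · have := A2 x hx; simp only at hh; omega
    · have := A2 x hx; have := A1 c hc; omega
    · exact C2 x hx c hc hh
  · intro x hx c hc hh
    rcases key x hx with rfl | hx | hx <;> rcases key c hc with rfl | hc | hc
    · simp only at hh; omega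
    · have := A1 c hc; simp only at hh; omega
    · have := A2 c hc; simp only at hh; omega
    · have := A1 x hx; simp only at hh; omega
    · exact D1 x hx c hc hh
    · have := A1 x hx; have := A2 c hc; omega
    · have := A2 x hx; simp only at hh; omega
    · have := A2 x hx; have := A1 c hc; omega
    · exact D2 x hx c hc hh
  · intro x hx
    rcases key x hx with rfl | hx | hx
    · exact hR
    · exact E1 x hx
    · exact E2 x hx

lemma GoodNC_split {R : ℕ → ℕ → Prop} {a b : ℕ} {π : Finset (ℕ × ℕ)}
    (hab : a < b) (g : GoodNC R a b π) :
    ∃ e π₁ π₂, a < e ∧ e < b ∧ R a e ∧ GoodNC R (a+1) e π₁ ∧ GoodNC R (e+1) b π₂ ∧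
      insert (a,e) (π₁ ∪ π₂) = π := by
  obtain ⟨A, B, C, D, E⟩ := g
  obtain ⟨⟨a', e⟩, hc, hh⟩ := B a le_rfl hab
  have hAc := A _ hc
  simp only at hh hAc
  obtain rfl : a = a' := by omega
  have key : ∀ x ∈ π, x = (a,e) ∨ (a + 1 ≤ x.1 ∧ x.2 < e) ∨ (e + 1 ≤ x.1) := by
    intro x hx
    by_cases hxe : x = (a,e)
    · exact Or.inl hxe
    right
    have h1 := A x hx
    have h2 : ¬ _ := fun h => hxe (C x hx _ hc h)
    have h3 := D _ hc x hx
    simp only at h2 h3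
    omega
  refine ⟨e, π.filter (fun x => a + 1 ≤ x.1 ∧ x.2 < e), π.filter (fun x => e + 1 ≤ x.1),
    hAc.2.2, hAc.2.1, E _ hc, ⟨?_, ?_, ?_, ?_, ?_⟩, ⟨?_, ?_, ?_, ?_, ?_⟩, ?_⟩
  · intro x hx
    rw [Finset.mem_filter] at hx
    have := A x hx.1
    omega
  · intro x hx hx'
    obtain ⟨c, hc', hh'⟩ := B x (by omega) (by omega)
    refine ⟨c, ?_, hh'⟩
    rw [Finset.mem_filter]
    refine ⟨hc', ?_⟩
    have := A c hc'
    rcases key c hc' with rfl | h | h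
    · simp only at hh'; omega
    · exact h
    · omega
  · intro x hx c hc
    exact C x (Finset.mem_of_mem_filter _ hx) c (Finset.mem_of_mem_filter _ hc)
  · intro x hx c hc
    exact D x (Finset.mem_of_mem_filter _ hx) c (Finset.mem_of_mem_filter _ hc)
  · intro x hx
    exact E x (Finset.mem_of_mem_filter _ hx)
  · intro x hx
    rw [Finset.mem_filter] at hx
    have := A x hx.1
    omega
  · intro x hx hx'
    obtain ⟨c, hc', hh'⟩ := B x (by omega) (by omega)
    refine ⟨c, ?_, hh'⟩
    rw [Finset.mem_filter]
    refine ⟨hc', ?_⟩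
    have := A c hc'
    rcases key c hc' with rfl | h | h
    · simp only at hh'; omega
    · omega
    · exact h
  · intro x hx c hc
    exact C x (Finset.mem_of_mem_filter _ hx) c (Finset.mem_of_mem_filter _ hc)
  · intro x hx c hc
    exact D x (Finset.mem_of_mem_filter _ hx) c (Finset.mem_of_mem_filter _ hc)
  · intro x hx
    exact E x (Finset.mem_of_mem_filter _ hx)
  · ext x
    simp only [Finset.mem_insert, Finset.mem_union, Finset.mem_filter]
    constructor
    · rintro (rfl | h | h)
      · exact hc
      · exact h.1
      · exact h.1
    · intro hx
      rcases key x hx with h | h | h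
      · exact Or.inl h
      · exact Or.inr (Or.inl ⟨hx, h⟩)
      · exact Or.inr (Or.inr ⟨hx, h⟩)

lemma glue_inj {R : ℕ → ℕ → Prop} {a b e e' : ℕ} {π₁ π₂ ρ₁ ρ₂ : Finset (ℕ × ℕ)}
    (h1 : a < e) (h1' : a < e')
    (g1 : GoodNC R (a+1) e π₁) (g2 : GoodNC R (e+1) b π₂)
    (g1' : GoodNC R (a+1) e' ρ₁) (g2' : GoodNC R (e'+1) b ρ₂)
    (h : insert (a,e) (π₁ ∪ π₂) = insert (a,e') (ρ₁ ∪ ρ₂)) :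
    e = e' ∧ π₁ = ρ₁ ∧ π₂ = ρ₂ := by
  have A1 := g1.1
  have A2 := g2.1
  have A1' := g1'.1
  have A2' := g2'.1
  have hm : ∀ x, x ∈ insert (a,e) (π₁ ∪ π₂) ↔ x ∈ insert (a,e') (ρ₁ ∪ ρ₂) := by simp [h]
  simp only [Finset.mem_insert, Finset.mem_union] at hm
  have he : e = e' := by
    rcases (hm (a,e)).1 (Or.inl rfl) with h | h | h
    · simpa using h
    · have := A1' _ h; simp only at this; omega
    · have := A2' _ h; simp only at this; omega
  subst he
  refine ⟨rfl, ?_, ?_⟩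
  · ext x
    constructor
    · intro hx
      have := A1 x hx
      rcases (hm x).1 (Or.inr (Or.inl hx)) with h | h | h
      · rw [h] at this; simp only at this; omega
      · exact h
      · have := A2' x h; omega
    · intro hx
      have := A1' x hx
      rcases (hm x).2 (Or.inr (Or.inl hx)) with h | h | h
      · rw [h] at this; simp only at this; omega
      · exact h
      · have := A2 x h; omega
  · ext x
    constructor
    · intro hx
      have := A2 x hx
      rcases (hm x).1 (Or.inr (Or.inr hx)) with h | h | h
      · rw [h] at this; simp only at this; omega
      · have := A1' x h; omega
      · exact h
    · intro hx
      have := A2' x hx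
      rcases (hm x).2 (Or.inr (Or.inr hx)) with h | h | h
      · rw [h] at this; simp only at this; omega
      · have := A1 x h; omega
      · exact h

open Classical in
lemma ZNC_rec {A : Type*} [CommSemiring A] (R : ℕ → ℕ → Prop) (w : ℕ → A) (a b : ℕ)
    (hab : a < b) :
    ZNC R w a b = ∑ e ∈ (Finset.Ico (a+1) b).filter (fun e => R a e),
      w e * (ZNC R w (a+1) e * ZNC R w (e+1) b) := by
  have hR : ∀ e, w e * (ZNC R w (a+1) e * ZNC R w (e+1) b) =
      ∑ q ∈ SNC R (a+1) e ×ˢ SNC R (e+1) b,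
        w e * ((∏ x ∈ q.1, w x.2) * (∏ x ∈ q.2, w x.2)) := by
    intro e
    rw [ZNC, ZNC, Finset.sum_mul_sum, Finset.mul_sum, Finset.sum_product]
    simp_rw [Finset.mul_sum]
  simp_rw [hR]
  rw [Finset.sum_sigma', ZNC]
  symm
  refine Finset.sum_nbij (fun q => insert (a, q.1) (q.2.1 ∪ q.2.2)) ?_ ?_ ?_ ?_
  · rintro ⟨e, π₁, π₂⟩ hq
    simp only [Finset.mem_sigma, Finset.mem_filter, Finset.mem_Ico, Finset.mem_product,
      mem_SNC] at hq ⊢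
    exact GoodNC_glue (by omega) (by omega) hq.1.2 hq.2.1 hq.2.2
  · rintro ⟨e, π₁, π₂⟩ hq ⟨e', ρ₁, ρ₂⟩ hq' h
    simp only [Finset.mem_coe, Finset.mem_sigma, Finset.mem_filter, Finset.mem_Ico,
      Finset.mem_product, mem_SNC] at hq hq' h
    obtain ⟨rfl, rfl, rfl⟩ := glue_inj (by omega) (by omega) hq.2.1 hq.2.2 hq'.2.1 hq'.2.2 h
    rfl
  · intro π hπ
    rw [Finset.mem_coe, mem_SNC] at hπ
    obtain ⟨e, π₁, π₂, h1, h2, h3, h4, h5, h6⟩ := GoodNC_split hab hπ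
    refine ⟨⟨e, π₁, π₂⟩, ?_, h6⟩
    simp only [Finset.mem_coe, Finset.mem_sigma, Finset.mem_filter, Finset.mem_Ico,
      Finset.mem_product, mem_SNC]
    exact ⟨⟨⟨by omega, h2⟩, h3⟩, h4, h5⟩
  · rintro ⟨e, π₁, π₂⟩ hq
    simp only [Finset.mem_sigma, Finset.mem_filter, Finset.mem_Ico, Finset.mem_product,
      mem_SNC] at hq ⊢
    have A1 := hq.2.1.1
    have A2 := hq.2.2.1
    rw [Finset.prod_insert, Finset.prod_union]
    · rw [Finset.disjoint_left]
      intro x hx hx'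
      have := A1 x hx; have := A2 x hx'; omega
    · rw [Finset.mem_union]
      rintro (h | h)
      · have := A1 _ h; simp only at this; omega
      · have := A2 _ h; simp only at this; omega

lemma ZNC_shift {A : Type*} [CommSemiring A] (R R' : ℕ → ℕ → Prop) (w w' : ℕ → A) (c : ℕ) :
    ∀ n a b, b - a ≤ n → a ≤ b →
      (∀ x y, a ≤ x → x < b → a ≤ y → y < b → (R (x + c) (y + c) ↔ R' x y)) →
      (∀ x, a ≤ x → x < b → w (x + c) = w' x) →
    ZNC R w (a + c) (b + c) = ZNC R' w' a b := by
  classical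
  intro n
  induction n with
  | zero =>
    intro a b h h' _ _
    obtain rfl : a = b := by omega
    simp [ZNC_self]
  | succ n ih =>
    intro a b h h' hR hw
    rcases Nat.eq_or_lt_of_le h' with rfl | hlt
    · simp [ZNC_self]
    rw [ZNC_rec _ _ _ _ hlt, ZNC_rec _ _ _ _ (by omega)]
    symm
    refine Finset.sum_nbij (fun e => e + c) ?_ ?_ ?_ ?_
    · intro e he
      simp only [Finset.mem_filter, Finset.mem_Ico] at he ⊢
      exact ⟨by omega, (hR _ _ (by omega) (by omega) (by omega) (by omega)).2 he.2⟩
    · intro e _ e' _ h; simpa using h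
    · intro e he
      simp only [Finset.coe_filter, Finset.mem_Ico, Set.mem_ofPred_eq, Set.mem_image] at he ⊢
      obtain ⟨e', rfl⟩ : ∃ e', e = e' + c := ⟨e - c, by omega⟩
      exact ⟨e', ⟨by omega, (hR _ _ (by omega) (by omega) (by omega) (by omega)).1 he.2⟩, rfl⟩
    · intro e he
      simp only [Finset.mem_filter, Finset.mem_Ico] at he
      have e1 := ih (a+1) e (by omega) (by omega)
        (fun x y _ _ _ _ => hR x y (by omega) (by omega) (by omega) (by omega))
        (fun x _ _ => hw x (by omega) (by omega))
      have e2 := ih (e+1) b (by omega) (by omega)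
        (fun x y _ _ _ _ => hR x y (by omega) (by omega) (by omega) (by omega))
        (fun x _ _ => hw x (by omega) (by omega))
      rw [← e1, ← e2, hw e (by omega) (by omega)]
      congr 3 <;> ring_nf

def RelW (p i x y : ℕ) : Prop := ∃ l, 1 ≤ l ∧ l ≤ p ∧
    ((labelW p i x = (l, false) ∧ labelW p i y = (l, true)) ∨
     (labelW p i x = (l, true) ∧ labelW p i y = (l, false)))

def wtl {A : Type*} (d : ℕ → A) (c : ℕ × Bool) : A := if c.2 then d c.1 else d (c.1 - 1)

noncomputable def ZW {A : Type*} [CommSemiring A] (p i : ℕ) (d : ℕ → A) (k : ℕ) : A :=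
  ZNC (RelW p i) (fun m => wtl d (labelW p i m)) 1 (2 * p * k + 1)

lemma labelW_shift_s10 (p i m c t : ℕ) (hp : 1 ≤ p) (hi : i ≤ p) (hm : 1 ≤ m)
    (hc : c + i = 2 * p * t) : labelW p 0 (m + c) = labelW p i m := by
  unfold labelW
  congr 2
  have h1 : m + c - 1 + (2 * p - 0) + 2 * p * 1 = m - 1 + (2 * p - i) + 2 * p * (t + 1) := by
    rw [mul_add, ← hc]; omega
  rw [← Nat.add_mul_mod_self_left _ _ 1, h1, Nat.add_mul_mod_self_left]

lemma ZNC_eq_ZW {A : Type*} [CommSemiring A] (p i c t k : ℕ) (d : ℕ → A) (hp : 1 ≤ p)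
    (hi : i ≤ p) (hc : c + i = 2 * p * t) :
    ZNC (RelW p 0) (fun m => wtl d (labelW p 0 m)) (c + 1) (c + 1 + 2 * p * k) = ZW p i d k := by
  have := ZNC_shift (RelW p 0) (RelW p i) (fun m => wtl d (labelW p 0 m))
    (fun m => wtl d (labelW p i m)) c _ 1 (2 * p * k + 1) le_rfl (by omega)
    (fun x y hx _ hy _ => by
      unfold RelW
      rw [labelW_shift_s10 p i x c t hp hi hx hc, labelW_shift_s10 p i y c t hp hi hy hc])
    (fun x hx _ => by rw [labelW_shift_s10 p i x c t hp hi hx hc])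
  rw [ZW, ← this]
  congr 1 <;> ring

lemma labelW_zero_lt (p s : ℕ) (h1 : 1 ≤ s) (h2 : s ≤ p) : labelW p 0 s = (s, false) := by
  unfold labelW letter0
  have : (s - 1 + (2 * p - 0)) % (2 * p) = s - 1 := by
    rw [Nat.sub_zero, Nat.add_mod_right, Nat.mod_eq_of_lt (by omega)]
  rw [this, if_pos (by omega)]
  congr 1; omega

lemma RelW_zero (p s e : ℕ) (h1 : 1 ≤ s) (h2 : s ≤ p) (he : 1 ≤ e) :
    RelW p 0 s e ↔ ∃ K, e = 2 * p * K + (2 * p + 1 - s) := by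
  unfold RelW
  rw [labelW_zero_lt p s h1 h2]
  have hl : labelW p 0 e = (s, true) ↔ (e - 1) % (2 * p) = 2 * p - s := by
    unfold labelW letter0
    rw [Nat.sub_zero, Nat.add_mod_right]
    have := Nat.mod_lt (e - 1) (show 0 < 2 * p by omega)
    split_ifs with h
    · simp; omega
    · simp; omega
  have : (∃ l, 1 ≤ l ∧ l ≤ p ∧ (((s, false) = (l, false) ∧ labelW p 0 e = (l, true)) ∨
     ((s, false) = (l, true) ∧ labelW p 0 e = (l, false)))) ↔ labelW p 0 e = (s, true) := by
    constructor
    · rintro ⟨l, _, _, h | h⟩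
      · obtain ⟨h, h'⟩ := h
        simp only [Prod.mk.injEq, and_true] at h
        rw [h, h']
      · simp at h
    · intro h
      exact ⟨s, h1, h2, Or.inl ⟨rfl, h⟩⟩
  rw [this, hl]
  constructor
  · intro h
    refine ⟨(e - 1) / (2 * p), ?_⟩
    have := Nat.div_add_mod (e - 1) (2 * p)
    omega
  · rintro ⟨K, rfl⟩
    have h3 : 2 * p * K + (2 * p + 1 - s) - 1 = (2 * p - s) + 2 * p * K := by
      clear this hl
      omega
    rw [h3, Nat.add_mul_mod_self_left, Nat.mod_eq_of_lt (by omega)]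

noncomputable def GW {A : Type*} [CommSemiring A] (p : ℕ) (d : ℕ → A) (s K : ℕ) : A :=
  ZNC (RelW p 0) (fun m => wtl d (labelW p 0 m)) (s + 1) (2 * p * K + (2 * p - s) + 1)

lemma GW_rec {A : Type*} [CommSemiring A] (p : ℕ) (d : ℕ → A) (s K : ℕ) (hs : s < p) :
    GW p d s K = ∑ q ∈ Finset.HasAntidiagonal.antidiagonal K, d (s + 1) * (GW p d (s + 1) q.1 * ZW p s d q.2) := by
  classical
  unfold GW
  rw [ZNC_rec _ _ _ _ (by omega)]
  symm
  refine Finset.sum_nbij (fun q => 2 * p * q.1 + (2 * p - s)) ?_ ?_ ?_ ?_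
  · rintro ⟨x, y⟩ hq
    simp only [Finset.HasAntidiagonal.mem_antidiagonal] at hq
    subst hq
    simp only [Finset.mem_filter, Finset.mem_Ico]
    refine ⟨⟨by omega, by rw [mul_add]; omega⟩, ?_⟩
    rw [RelW_zero p (s+1) _ (by omega) (by omega) (by omega)]
    exact ⟨x, by omega⟩
  · rintro ⟨x, y⟩ hq ⟨x', y'⟩ hq' h
    simp only [Finset.mem_coe, Finset.HasAntidiagonal.mem_antidiagonal] at hq hq' h
    have h' : 2 * p * x = 2 * p * x' := by omega
    have := Nat.eq_of_mul_eq_mul_left (by omega) h'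
    ext <;> simp <;> omega
  · intro e he
    simp only [Finset.mem_coe, Finset.mem_filter, Finset.mem_Ico] at he
    obtain ⟨⟨h1, h2⟩, h3⟩ := he
    rw [RelW_zero p (s+1) _ (by omega) (by omega) (by omega)] at h3
    obtain ⟨x, rfl⟩ := h3
    have hx : 2 * p * x ≤ 2 * p * K := by omega
    have hx := Nat.le_of_mul_le_mul_left hx (by omega)
    refine ⟨(x, K - x), ?_, ?_⟩
    · rw [Finset.mem_coe, Finset.HasAntidiagonal.mem_antidiagonal]; simp only; omega
    · simp only; omega
  · rintro ⟨x, y⟩ hq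
    simp only [Finset.HasAntidiagonal.mem_antidiagonal] at hq
    subst hq
    simp only
    have hl : labelW p 0 (2 * p * x + (2 * p - s)) = (s + 1, true) := by
      have := (RelW_zero p (s+1) (2 * p * x + (2 * p - s)) (by omega) (by omega) (by omega)).2
        ⟨x, by omega⟩
      obtain ⟨l, _, _, h | h⟩ := this
      · rw [labelW_zero_lt p (s+1) (by omega) (by omega)] at h
        obtain ⟨h, h'⟩ := h
        simp only [Prod.mk.injEq, and_true] at h
        rw [h, h']
      · rw [labelW_zero_lt p (s+1) (by omega) (by omega)] at h
        simp at h
    have e1 := ZNC_eq_ZW p s (2 * p * x + (2 * p - s)) (x + 1) y d (by omega) (by omega)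
      (by rw [mul_add]; omega)
    rw [hl, ← e1]
    have e2 : 2 * p * x + (2 * p - (s + 1)) + 1 = 2 * p * x + (2 * p - s) := by omega
    have e3 : 2 * p * (x + y) + (2 * p - s) + 1 = 2 * p * x + (2 * p - s) + 1 + 2 * p * y := by
      rw [mul_add]; omega
    rw [e2, e3]
    simp [wtl]

lemma GW_mk {A : Type*} [CommSemiring A] (p : ℕ) (d : ℕ → A) (s : ℕ) (hs : s ≤ p) :
    PowerSeries.mk (GW p d 0) =
      PowerSeries.C (∏ i ∈ Finset.range s, d (i + 1)) *
      ((∏ i ∈ Finset.range s, PowerSeries.mk (ZW p i d)) * PowerSeries.mk (GW p d s)) := by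
  induction s with
  | zero => simp
  | succ s ih =>
    rw [ih (by omega)]
    have : PowerSeries.mk (GW p d s) = PowerSeries.C (d (s + 1)) *
        (PowerSeries.mk (GW p d (s + 1)) * PowerSeries.mk (ZW p s d)) := by
      ext K
      rw [PowerSeries.coeff_C_mul, PowerSeries.coeff_mul, PowerSeries.coeff_mk,
        GW_rec p d s K (by omega), Finset.mul_sum]
      simp
    rw [this, Finset.prod_range_succ, Finset.prod_range_succ, map_mul]
    ring

lemma ZW_main {A : Type*} [CommSemiring A] (p k : ℕ) (d : ℕ → A) (hp : 1 ≤ p) (hk : 1 ≤ k) :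
    ZW p 0 d k = (∏ i ∈ Finset.range p, d (i + 1)) *
      ∑ κ ∈ Finset.Nat.antidiagonalTuple (p + 1) (k - 1), ∏ i : Fin (p + 1), ZW p i d (κ i) := by
  have h1 : ZW p 0 d k = PowerSeries.coeff (k - 1) (PowerSeries.mk (GW p d 0)) := by
    rw [PowerSeries.coeff_mk, ZW, GW]
    congr 1
    obtain ⟨k, rfl⟩ : ∃ k', k = k' + 1 := ⟨k - 1, by omega⟩
    simp [mul_add]
  have h2 : GW p d p = ZW p p d := by
    funext K
    rw [← ZNC_eq_ZW p p p 1 K d hp le_rfl (by ring), GW]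
    congr 1
    omega
  rw [h1, GW_mk p d p le_rfl, h2, ← Finset.prod_range_succ, PowerSeries.coeff_C_mul,
    Finset.prod_range (fun i => PowerSeries.mk (ZW p i d)), PowerSeries.coeff_prod]
  congr 1
  refine Finset.sum_nbij' (fun κ => (κ : Fin (p+1) → ℕ)) (fun κ => Finsupp.equivFunOnFinite.symm κ)
    ?_ ?_ ?_ ?_ ?_
  · intro κ hκ
    rw [Finset.mem_finsuppAntidiag] at hκ
    rw [Finset.Nat.mem_antidiagonalTuple]
    exact hκ.1
  · intro κ hκ
    rw [Finset.Nat.mem_antidiagonalTuple] at hκ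
    rw [Finset.mem_finsuppAntidiag]
    exact ⟨by simpa using hκ, by simp⟩
  · intro κ _; ext; simp
  · intro κ _; ext; simp
  · intro κ _; simp

lemma labelW_range (p i m : ℕ) (hp : 1 ≤ p) : 1 ≤ (labelW p i m).1 ∧ (labelW p i m).1 ≤ p := by
  unfold labelW letter0
  have := Nat.mod_lt (m - 1 + (2 * p - i)) (show 0 < 2 * p by omega)
  split_ifs <;> simp only <;> omega

noncomputable def dX (p : ℕ) (l : ℕ) : MvPowerSeries (Fin (p + 1)) ℕ :=
  MvPowerSeries.monomial
    (Finsupp.equivFunOnFinite.symm (fun r : Fin (p + 1) => if (r : ℕ) = l then 1 else 0)) 1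

lemma prod_wtl (p i : ℕ) (hp : 1 ≤ p) (π : Finset (ℕ × ℕ)) :
    ∏ x ∈ π, wtl (dX p) (labelW p i x.2) =
      MvPowerSeries.monomial
        (Finsupp.equivFunOnFinite.symm (fun r : Fin (p + 1) => jstat p i π r)) 1 := by
  have h : ∀ x : ℕ × ℕ, wtl (dX p) (labelW p i x.2) = MvPowerSeries.monomial
      (Finsupp.equivFunOnFinite.symm (fun r : Fin (p + 1) =>
        (if labelW p i x.2 = ((r : ℕ) + 1, false) then 1 else 0) +
        (if labelW p i x.2 = ((r : ℕ), true) then 1 else 0))) 1 := by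
    intro x
    have := labelW_range p i x.2 hp
    generalize labelW p i x.2 = c at *
    obtain ⟨l, c⟩ := c
    unfold wtl dX
    cases c
    · simp only [Bool.false_eq_true, if_false, Prod.mk.injEq, and_true, and_false, add_zero]
      simp only at this
      congr 3
      funext r
      by_cases hr : (r : ℕ) = l - 1
      · rw [if_pos hr, if_pos (by omega)]
      · rw [if_neg hr, if_neg (by omega)]
    · simp only [if_true, Prod.mk.injEq, and_true, reduceCtorEq, and_false, if_false, zero_add]
      congr 3
      funext r
      simp only [eq_comm]
  rw [Finset.prod_congr rfl (fun x _ => h x), MvPowerSeries.prod_monomial, Finset.prod_const_one]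
  congr 2
  ext r
  simp only [Finsupp.finsetSum_apply, Finsupp.equivFunOnFinite_symm_apply_apply, jstat,
    Finset.card_filter, Finset.sum_add_distrib]

lemma mem_NCset_s10 (p i k : ℕ) : NCset p i k = SNC (RelW p i) 1 (2 * p * k + 1) := by
  classical
  ext π
  rw [mem_SNC, NCset, Finset.mem_filter, Finset.mem_powerset]
  simp only [AdaptedNCPP, IsNCPP, GoodNC, RelW, Nat.lt_succ_iff]
  constructor
  · rintro ⟨_, ⟨h1, h2, h3, h4⟩, h5⟩
    exact ⟨h1, h2, h3, h4, h5⟩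
  · rintro ⟨h1, h2, h3, h4, h5⟩
    refine ⟨fun x hx => ?_, ⟨h1, h2, h3, h4⟩, h5⟩
    have := h1 x hx
    simp only [Finset.mem_product, Finset.mem_Icc]
    omega

lemma coeff_ZW (p i k : ℕ) (hp : 1 ≤ p) (n : Fin (p + 1) →₀ ℕ) :
    MvPowerSeries.coeff n (ZW p i (dX p) k) = Ncount p i k n := by
  classical
  unfold ZW ZNC
  rw [← mem_NCset_s10, map_sum, Ncount, Finset.card_filter]
  refine Finset.sum_congr rfl (fun π _ => ?_)
  rw [prod_wtl p i hp, MvPowerSeries.coeff_monomial]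
  have hiff : (n = Finsupp.equivFunOnFinite.symm (fun r : Fin (p + 1) => jstat p i π r)) ↔
      ∀ l : Fin (p + 1), jstat p i π (l : ℕ) = n l := by
    rw [DFunLike.ext_iff]
    simp [eq_comm]
  simp only [hiff]

lemma coeff_prod_ZW (p : ℕ) (hp : 1 ≤ p) (κ : Fin (p + 1) → ℕ) (n : Fin (p + 1) →₀ ℕ)
    (S : Finset (Fin (p + 1) → Fin (p + 1) → ℕ))
    (hS : ∀ J, J ∈ S ↔ ∀ r, ∑ i, J i r = n r) :
    MvPowerSeries.coeff n (∏ i : Fin (p + 1), ZW p i (dX p) (κ i)) =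
      ∑ J ∈ S, ∏ i : Fin (p + 1), Ncount p i (κ i) (J i) := by
  classical
  rw [MvPowerSeries.coeff_prod]
  refine Finset.sum_nbij' (fun f => fun i => (f i : Fin (p+1) → ℕ))
    (fun J => Finsupp.equivFunOnFinite.symm (fun i => Finsupp.equivFunOnFinite.symm (J i)))
    ?_ ?_ ?_ ?_ ?_
  · intro f hf
    rw [Finset.mem_finsuppAntidiag] at hf
    rw [hS]
    intro r
    rw [← hf.1, Finsupp.finsetSum_apply]
  · intro J hJ
    rw [hS] at hJ
    rw [Finset.mem_finsuppAntidiag]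
    refine ⟨?_, by simp⟩
    ext r
    rw [← hJ r, Finsupp.finsetSum_apply]
    simp
  · intro f _; ext; simp
  · intro J _; ext; simp
  · intro f _
    exact Finset.prod_congr rfl (fun i _ => coeff_ZW p i (κ i) hp (f i))

lemma prod_dX (p : ℕ) : ∏ i ∈ Finset.range p, dX p (i + 1) =
    MvPowerSeries.monomial
      (Finsupp.equivFunOnFinite.symm (fun r : Fin (p + 1) => if r = 0 then 0 else 1)) 1 := by
  unfold dX
  rw [MvPowerSeries.prod_monomial, Finset.prod_const_one]
  congr 2
  ext r
  simp only [Finsupp.finsetSum_apply, Finsupp.equivFunOnFinite_symm_apply_apply]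
  by_cases hr : r = 0
  · simp [hr]
  · rw [if_neg hr]
    have h0 : (r : ℕ) ≠ 0 := fun h => hr (Fin.ext h)
    have hlt := r.2
    rw [Finset.sum_eq_single ((r : ℕ) - 1)]
    · rw [if_pos (by omega)]
    · intro b _ hb
      rw [if_neg (by omega)]
    · intro h
      rw [Finset.mem_range] at h
      omega

/-- The recurrence (5): for `p, k ≥ 1` and any tuple `(j₀, …, j_p)`,
`N₀(k, j) = Σ ∏_{i=0}^{p} Nᵢ(kᵢ, (j_{i,0}, …, j_{i,p}))`, the sum running over all
`(k₀, …, k_p)` with `k₀ + ⋯ + k_p = k − 1` and all matrices `(j_{i,r})` of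
nonnegative integers with column sums `Σᵢ j_{i,0} = j₀` and `Σᵢ j_{i,r} = j_r − 1`
for `r ∈ {1, …, p}` (so the sum is empty if some `j_r = 0` with `r ≥ 1`). -/
theorem Ncount_recurrence (p k : ℕ) (hp : 1 ≤ p) (hk : 1 ≤ k)
    (j : Fin (p + 1) → ℕ) :
    Ncount p 0 k j =
      ∑ κ ∈ Finset.Nat.antidiagonalTuple (p + 1) (k - 1),
        ∑ J ∈ (Fintype.piFinset fun _ : Fin (p + 1) =>
            Fintype.piFinset fun r : Fin (p + 1) => Finset.range (j r + 1)).filter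
            (fun J => (∑ i, J i 0 = j 0) ∧
              ∀ r : Fin (p + 1), r ≠ 0 → (∑ i, J i r) + 1 = j r),
          ∏ i : Fin (p + 1), Ncount p (i : ℕ) (κ i) (J i) := by
  classical
  have hlhs := coeff_ZW p 0 k hp (Finsupp.equivFunOnFinite.symm j)
  rw [ZW_main p k (dX p) hp hk, prod_dX, MvPowerSeries.coeff_monomial_mul] at hlhs
  have hj : ((Finsupp.equivFunOnFinite.symm j : Fin (p + 1) →₀ ℕ) : Fin (p + 1) → ℕ) = j := by
    ext; simp
  rw [hj] at hlhs
  rw [← hlhs]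
  split_ifs with hle
  · rw [one_mul, map_sum]
    refine Finset.sum_congr rfl (fun κ _ => ?_)
    apply coeff_prod_ZW p hp
    intro J
    have hle' : ∀ r : Fin (p + 1), r ≠ 0 → 1 ≤ j r := by
      intro r hr
      have := hle r
      simpa [hr] using this
    simp only [Finset.mem_filter, Fintype.mem_piFinset, Finset.mem_range, Finsupp.tsub_apply,
      Finsupp.equivFunOnFinite_symm_apply_apply]
    constructor
    · rintro ⟨_, h0, h1⟩ r
      by_cases hr : r = 0
      · subst hr; simpa using h0
      · rw [if_neg hr, ← h1 r hr]; rfl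
    · intro h
      refine ⟨fun i r => ?_, by simpa using h 0, fun r hr => ?_⟩
      · have h1 : J i r ≤ ∑ i, J i r :=
          Finset.single_le_sum (f := fun i => J i r) (fun _ _ => Nat.zero_le _) (Finset.mem_univ i)
        have := h r
        omega
      · have := h r
        rw [if_neg hr] at this
        have := hle' r hr
        omega
  · symm
    refine Finset.sum_eq_zero (fun κ _ => ?_)
    rw [Finset.filter_false_of_mem, Finset.sum_empty]
    rintro J _ ⟨_, h1⟩
    apply hle
    intro r
    by_cases hr : r = 0
    · simp [hr]
    · have := h1 r hr
      simp only [Finsupp.equivFunOnFinite_symm_apply_apply, if_neg hr]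
      omega
end

section
/- For all integers p ≥ 1, k ≥ 1 and real numbers d_0, d_1, ..., d_p, the polynomial P_k(d_0, d_1, ..., d_p) = Σ_{π ∈ NC²_{2pk}(W_0^k)} d_0^{j_0(π)} d_1^{j_1(π)} ··· d_p^{j_p(π)} has the explicit form P_k(d_0, d_1, ..., d_p) = Σ (1/k) ∏_{i=0}^{p} C(k, j_i) · d_0^{j_0 − 1} d_1^{j_1} ··· d_p^{j_p}, where the sum runs over all tuples (j_0, ..., j_p) of positive integers with j_0 + j_1 + ... + j_p = pk + 1. -/
open Polynomial in
theorem aux_lagrange (φ : ℝ[X]) (v : PowerSeries ℝ)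
    (hv : v = PowerSeries.X * aeval v φ) :
    ∀ (n : ℕ) (f : ℝ[X]),
      (n : ℝ) * PowerSeries.coeff n (aeval v f) = (X * derivative f * φ ^ n).coeff n := by
  have hder : ∀ (n : ℕ) (h : ℝ[X]), (X * derivative h).coeff n = n * h.coeff n := by
    intro n h
    cases n with
    | zero => simp
    | succ n => rw [coeff_X_mul, coeff_derivative]; push_cast; ring
  have hv0 : PowerSeries.constantCoeff v = 0 := by
    rw [hv]; simp
  have hc0 : ∀ f : ℝ[X], PowerSeries.coeff 0 (aeval v f) = f.coeff 0 := by
    intro f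
    rw [← divX_mul_X_add f]
    simp [hv0]
  intro n
  induction n with
  | zero => intro f; simp
  | succ n ih =>
    intro f
    rw [← divX_mul_X_add f]
    set g := divX f
    have h1 : PowerSeries.coeff (n+1) (aeval v (g * X + C (f.coeff 0)))
        = PowerSeries.coeff n (aeval v (g * φ)) := by
      have : aeval v (g * X + C (f.coeff 0)) =
          PowerSeries.X * aeval v (g * φ) + PowerSeries.C (f.coeff 0) := by
        simp only [map_add, map_mul, aeval_X, aeval_C]
        rw [PowerSeries.algebraMap_apply]
        simp only [Algebra.algebraMap_self, RingHom.id_apply]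
        linear_combination (aeval v g) * hv
      rw [this, map_add, PowerSeries.coeff_succ_X_mul, PowerSeries.coeff_C]
      simp
    rw [h1]
    have h2 : (X * derivative (g * X + C (f.coeff 0)) * φ ^ (n+1)).coeff (n+1)
        = (X * derivative g * φ^(n+1)).coeff n + (g * φ^(n+1)).coeff n := by
      rw [mul_assoc, coeff_X_mul, ← coeff_add]
      congr 1
      simp; ring
    rw [h2]
    rcases Nat.eq_zero_or_pos n with rfl | hn
    · rw [hc0]; simp [mul_assoc]
    · have hn' : (n : ℝ) ≠ 0 := by positivity
      apply mul_left_cancel₀ hn'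
      have h3 := ih (g * φ)
      have h4 := hder n (g * φ^(n+1))
      have h5 : ((n+1 : ℕ) : ℝ) * (X * derivative (g * φ) * φ ^ n).coeff n
          = n * (X * derivative g * φ^(n+1)).coeff n
            + (X * derivative (g * φ^(n+1))).coeff n := by
        rw [← coeff_C_mul, ← coeff_C_mul, ← coeff_add]
        congr 1
        simp [derivative_pow]
        ring
      rw [h4] at h5
      rw [← mul_assoc, mul_comm (n:ℝ), mul_assoc, h3, h5]; ring

/-- all NC pairings of the interval `[a,b)`. -/
def auxNC (a b : ℕ) (π : Finset (ℕ × ℕ)) : Prop :=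
  (∀ x ∈ π, a ≤ x.1 ∧ x.2 < b ∧ x.1 < x.2) ∧
  (∀ x, a ≤ x → x < b → ∃ y ∈ π, x = y.1 ∨ x = y.2) ∧
  (∀ b ∈ π, ∀ c ∈ π, (b.1 = c.1 ∨ b.1 = c.2 ∨ b.2 = c.1 ∨ b.2 = c.2) → b = c) ∧
  (∀ b ∈ π, ∀ c ∈ π, ¬(b.1 < c.1 ∧ c.1 < b.2 ∧ b.2 < c.2))

open Classical in
noncomputable def auxSet (a b : ℕ) : Finset (Finset (ℕ × ℕ)) :=
  (Finset.Ico a b ×ˢ Finset.Ico a b).powerset.filter (auxNC a b)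

theorem mem_auxSet {a b : ℕ} {π} : π ∈ auxSet a b ↔ auxNC a b π := by
  classical
  simp only [auxSet, Finset.mem_filter, Finset.mem_powerset, and_iff_right_iff_imp]
  intro h x hx
  have := h.1 x hx
  simp; omega

noncomputable def auxS (g : ℕ × ℕ → ℝ) (a b : ℕ) : ℝ :=
  ∑ π ∈ auxSet a b, ∏ x ∈ π, g x

theorem auxS_self (g) (a : ℕ) : auxS g a a = 1 := by
  have : auxSet a a = {∅} := by
    ext π
    rw [mem_auxSet, Finset.mem_singleton]
    constructor
    · intro h
      rw [Finset.eq_empty_iff_forall_notMem]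
      intro x hx
      have := h.1 x hx
      omega
    · rintro rfl
      refine ⟨by simp, ?_, by simp, by simp⟩
      intro x h1 h2; omega
  simp [auxS, this]

/-- gluing -/
theorem auxNC_glue {a b c : ℕ} (hac : a < c) (hcb : c < b) {π₁ π₂ : Finset (ℕ × ℕ)}
    (h1 : auxNC (a+1) c π₁) (h2 : auxNC (c+1) b π₂) :
    auxNC a b (insert (a,c) (π₁ ∪ π₂)) := by
  obtain ⟨p1, q1, r1, s1⟩ := h1
  obtain ⟨p2, q2, r2, s2⟩ := h2
  refine ⟨?_, ?_, ?_, ?_⟩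
  · intro x hx
    simp only [Finset.mem_insert, Finset.mem_union] at hx
    rcases hx with rfl | hx | hx
    · simp; omega
    · have := p1 x hx; omega
    · have := p2 x hx; omega
  · intro x hx hxb
    by_cases e1 : x = a
    · exact ⟨(a,c), by simp, by simp [e1]⟩
    by_cases e2 : x = c
    · exact ⟨(a,c), by simp, by simp [e2]⟩
    by_cases e3 : x < c
    · obtain ⟨y, hy, h⟩ := q1 x (by omega) e3
      exact ⟨y, by simp [hy], h⟩
    · obtain ⟨y, hy, h⟩ := q2 x (by omega) hxb
      exact ⟨y, by simp [hy], h⟩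
  · intro x hx y hy hxy
    simp only [Finset.mem_insert, Finset.mem_union] at hx hy
    rcases hx with rfl | hx | hx <;> rcases hy with rfl | hy | hy
    · rfl
    · have := p1 y hy; simp only at hxy; omega
    · have := p2 y hy; simp only at hxy; omega
    · have := p1 x hx; simp only at hxy; omega
    · exact r1 x hx y hy hxy
    · have := p1 x hx; have := p2 y hy; omega
    · have := p2 x hx; simp only at hxy; omega
    · have := p2 x hx; have := p1 y hy; omega
    · exact r2 x hx y hy hxy
  · intro x hx y hy
    simp only [Finset.mem_insert, Finset.mem_union] at hx hy
    rcases hx with rfl | hx | hx <;> rcases hy with rfl | hy | hy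
    · simp
    · have := p1 y hy; simp only; omega
    · have := p2 y hy; simp only; omega
    · have := p1 x hx; simp only; omega
    · exact s1 x hx y hy
    · have := p1 x hx; have := p2 y hy; omega
    · have := p2 x hx; simp only; omega
    · have := p2 x hx; have := p1 y hy; omega
    · exact s2 x hx y hy

theorem auxNC_split {a b c : ℕ} {π : Finset (ℕ × ℕ)}
    (h : auxNC a b π) (hc : (a,c) ∈ π) :
    a < c ∧ c < b ∧ auxNC (a+1) c (π.filter fun x => x.2 < c) ∧
      auxNC (c+1) b (π.filter fun x => c < x.1) ∧
      insert (a,c) ((π.filter fun x => x.2 < c) ∪ (π.filter fun x => c < x.1)) = π := by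
  obtain ⟨p, q, r, s⟩ := h
  have hac := p _ hc
  simp only at hac
  have key : ∀ x ∈ π, x = (a,c) ∨ (a < x.1 ∧ x.2 < c) ∨ c < x.1 := by
    intro x hx
    by_cases e : x = (a,c)
    · exact Or.inl e
    · right
      have h1 := mt (r x hx _ hc) e
      have h2 := s _ hc x hx
      have h3 := p x hx
      simp only at h1 h2 h3
      omega
  refine ⟨hac.2.2, hac.2.1, ⟨?_, ?_, ?_, ?_⟩, ⟨?_, ?_, ?_, ?_⟩, ?_⟩
  · intro x hx
    rw [Finset.mem_filter] at hx
    have h3 := p x hx.1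
    rcases key x hx.1 with rfl | h | h
    · simp at hx
    · omega
    · omega
  · intro x h1 h2
    obtain ⟨y, hy, h⟩ := q x (by omega) (by omega)
    refine ⟨y, ?_, h⟩
    rw [Finset.mem_filter]
    refine ⟨hy, ?_⟩
    have h3 := p y hy
    rcases key y hy with rfl | h | h
    · simp only at h; omega
    · omega
    · omega
  · intro x hx y hy
    exact r x (Finset.mem_filter.1 hx).1 y (Finset.mem_filter.1 hy).1
  · intro x hx y hy
    exact s x (Finset.mem_filter.1 hx).1 y (Finset.mem_filter.1 hy).1
  · intro x hx
    rw [Finset.mem_filter] at hx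
    have h3 := p x hx.1
    omega
  · intro x h1 h2
    obtain ⟨y, hy, h⟩ := q x (by omega) (by omega)
    refine ⟨y, ?_, h⟩
    rw [Finset.mem_filter]
    refine ⟨hy, ?_⟩
    have h3 := p y hy
    rcases key y hy with rfl | h | h
    · simp only at h; omega
    · omega
    · omega
  · intro x hx y hy
    exact r x (Finset.mem_filter.1 hx).1 y (Finset.mem_filter.1 hy).1
  · intro x hx y hy
    exact s x (Finset.mem_filter.1 hx).1 y (Finset.mem_filter.1 hy).1
  · ext x
    simp only [Finset.mem_insert, Finset.mem_union, Finset.mem_filter]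
    constructor
    · rintro (rfl | h | h)
      · exact hc
      · exact h.1
      · exact h.1
    · intro hx
      rcases key x hx with h | h | h
      · exact Or.inl h
      · exact Or.inr (Or.inl ⟨hx, h.2⟩)
      · exact Or.inr (Or.inr ⟨hx, h⟩)

theorem auxS_rec (g) {a b : ℕ} (hab : a < b) :
    auxS g a b = ∑ c ∈ Finset.Ico (a+1) b, g (a,c) * (auxS g (a+1) c * auxS g (c+1) b) := by
  classical
  have hR : ∀ c, g (a,c) * (auxS g (a+1) c * auxS g (c+1) b)
      = ∑ q ∈ auxSet (a+1) c ×ˢ auxSet (c+1) b,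
          g (a,c) * ((∏ x ∈ q.1, g x) * ∏ x ∈ q.2, g x) := by
    intro c
    rw [auxS, auxS, Finset.sum_mul_sum, Finset.mul_sum, Finset.sum_product]
    simp_rw [Finset.mul_sum]
  simp_rw [hR]
  rw [Finset.sum_sigma']
  symm
  rw [auxS]
  refine Finset.sum_bij (fun q _ => insert (a, q.1) (q.2.1 ∪ q.2.2)) ?_ ?_ ?_ ?_
  · rintro ⟨c, π₁, π₂⟩ hq
    simp only [Finset.mem_sigma, Finset.mem_Ico, Finset.mem_product, mem_auxSet] at hq
    rw [mem_auxSet]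
    exact auxNC_glue (c := c) (by omega) (by omega) hq.2.1 hq.2.2
  · rintro ⟨c, π₁, π₂⟩ hq ⟨c', π₁', π₂'⟩ hq' h
    simp only [Finset.mem_sigma, Finset.mem_Ico, Finset.mem_product, mem_auxSet] at hq hq'
    simp only at h
    have hcc : c = c' := by
      have : (a,c) ∈ insert (a, c') (π₁' ∪ π₂') := by rw [← h]; simp
      simp only [Finset.mem_insert, Finset.mem_union] at this
      rcases this with h | h | h
      · simpa using h
      · have := hq'.2.1.1 _ h; simp only at this; omega
      · have := hq'.2.2.1 _ h; simp only at this; omega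
    subst hcc
    have e1 : π₁ = π₁' := by
      have := congrArg (Finset.filter fun x => a < x.1 ∧ x.2 < c) h
      have F : ∀ ρ₁ ρ₂, auxNC (a+1) c ρ₁ → auxNC (c+1) b ρ₂ →
          Finset.filter (fun x => a < x.1 ∧ x.2 < c) (insert (a,c) (ρ₁ ∪ ρ₂)) = ρ₁ := by
        intro ρ₁ ρ₂ h1 h2
        ext x
        simp only [Finset.mem_insert, Finset.mem_union, Finset.mem_filter]
        constructor
        · rintro ⟨rfl | h | h, h'⟩
          · simp at h'
          · exact h
          · have := h2.1 _ h; omega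
        · intro h
          have := h1.1 _ h
          exact ⟨Or.inr (Or.inl h), by omega⟩
      rwa [F _ _ hq.2.1 hq.2.2, F _ _ hq'.2.1 hq'.2.2] at this
    have e2 : π₂ = π₂' := by
      have := congrArg (Finset.filter fun x => c < x.1) h
      have F : ∀ ρ₁ ρ₂, auxNC (a+1) c ρ₁ → auxNC (c+1) b ρ₂ →
          Finset.filter (fun x => c < x.1) (insert (a,c) (ρ₁ ∪ ρ₂)) = ρ₂ := by
        intro ρ₁ ρ₂ h1 h2
        ext x
        simp only [Finset.mem_insert, Finset.mem_union, Finset.mem_filter]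
        constructor
        · rintro ⟨rfl | h | h, h'⟩
          · simp only at h'; omega
          · have := h1.1 _ h; omega
          · exact h
        · intro h
          have := h2.1 _ h
          exact ⟨Or.inr (Or.inr h), by omega⟩
      rwa [F _ _ hq.2.1 hq.2.2, F _ _ hq'.2.1 hq'.2.2] at this
    rw [e1, e2]
  · intro π hπ
    rw [mem_auxSet] at hπ
    obtain ⟨⟨y1, c⟩, hy, h⟩ := hπ.2.1 a le_rfl hab
    have h3 := hπ.1 _ hy
    simp only at h h3
    obtain rfl : y1 = a := by omega
    obtain ⟨h1, h2, h4, h5, h6⟩ := auxNC_split hπ hy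
    refine ⟨⟨c, _, _⟩, ?_, h6⟩
    simp only [Finset.mem_sigma, Finset.mem_Ico, Finset.mem_product, mem_auxSet]
    exact ⟨by omega, h4, h5⟩
  · rintro ⟨c, π₁, π₂⟩ hq
    simp only [Finset.mem_sigma, Finset.mem_Ico, Finset.mem_product, mem_auxSet] at hq
    simp only
    rw [Finset.prod_insert, Finset.prod_union]
    · rw [Finset.disjoint_left]
      intro x h1 h2
      have := hq.2.1.1 _ h1
      have := hq.2.2.1 _ h2
      omega
    · rw [Finset.mem_union]
      rintro (h | h)
      · have := hq.2.1.1 _ h; simp only at this; omega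
      · have := hq.2.2.1 _ h; simp only at this; omega

theorem aux_sum_step (q a c₀ b N : ℕ) (F : ℕ → ℝ) (hq : 0 < q) (h1 : a < c₀) (h2 : c₀ ≤ a + q)
    (h3 : q ∣ a + c₀ + 1) (hN : ∀ i, c₀ + q * i < b ↔ i < N) :
    ∑ c ∈ Finset.Ico (a+1) b, (if q ∣ a + c + 1 then F c else 0)
      = ∑ i ∈ Finset.range N, F (c₀ + q * i) := by
  rw [← Finset.sum_filter]
  have : (Finset.Ico (a+1) b).filter (fun c => q ∣ a + c + 1)
      = (Finset.range N).image (fun i => c₀ + q * i) := by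
    ext c
    simp only [Finset.mem_filter, Finset.mem_Ico, Finset.mem_image, Finset.mem_range]
    constructor
    · rintro ⟨⟨h4, h5⟩, h6⟩
      have hle : c₀ ≤ c := by
        by_contra hlt
        have h7 : q ∣ (a + c₀ + 1) - (a + c + 1) := Nat.dvd_sub h3 h6
        have := Nat.le_of_dvd (by omega) h7
        omega
      have h7 : q ∣ (a + c + 1) - (a + c₀ + 1) := Nat.dvd_sub h6 h3
      obtain ⟨i, hi⟩ := h7
      have hc : c₀ + q * i = c := by omega
      exact ⟨i, (hN i).1 (by omega), hc⟩
    · rintro ⟨i, hi, rfl⟩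
      refine ⟨⟨by omega, (hN i).2 hi⟩, ?_⟩
      have : a + (c₀ + q * i) + 1 = (a + c₀ + 1) + q * i := by ring
      rw [this]
      exact dvd_add h3 (dvd_mul_right _ _)
  rw [this, Finset.sum_image]
  intro i _ j _ h
  simp only at h
  exact Nat.eq_of_mul_eq_mul_left hq (by omega)

/-- vertex of the walk at time `c` -/
def auxVert (p c : ℕ) : ℕ := if c % (2*p) ≤ p then c % (2*p) else 2*p - c % (2*p)

theorem aux_shift1 (p : ℕ) (e : ℕ → ℝ) (T : ℕ → ℕ → ℝ) (h0 : ∀ a, T a a = 1)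
    (hrec : ∀ a b, a < b → T a b = ∑ c ∈ Finset.Ico (a+1) b,
      if 2*p ∣ a + c + 1 then e (auxVert p c) * (T (a+1) c * T (c+1) b) else 0) : ∀ n a b, b = a + n → T (a + 2*p) (b + 2*p) = T a b := by
  intro n
  induction n using Nat.strong_induction_on with
  | _ n ih =>
    intro a b hb
    rcases Nat.eq_zero_or_pos n with rfl | hn
    · simp only [add_zero] at hb; rw [hb, h0, h0]
    · rw [hrec a b (by omega), hrec (a+2*p) (b+2*p) (by omega)]
      rw [show a + 2*p + 1 = a + 1 + 2*p by ring, ← Finset.sum_Ico_add']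
      refine Finset.sum_congr rfl fun c hc => ?_
      rw [Finset.mem_Ico] at hc
      have hd : (2*p ∣ a + 2*p + (c + 2*p) + 1) ↔ 2*p ∣ a + c + 1 := by
        rw [show a + 2*p + (c + 2*p) + 1 = (a + c + 1) + 2*p*2 by ring]
        exact (Nat.dvd_add_left (dvd_mul_right _ _))
      have hv : auxVert p (c + 2*p) = auxVert p c := by simp [auxVert]
      rw [hv, ih (c - (a+1)) (by omega) (a+1) c (by omega),
        show c + 2*p + 1 = c + 1 + 2*p by ring,
        ih (b - (c+1)) (by omega) (c+1) b (by omega)]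
      simp only [hd]

theorem aux_shift (p : ℕ) (e : ℕ → ℝ) (T : ℕ → ℕ → ℝ) (h0 : ∀ a, T a a = 1)
    (hrec : ∀ a b, a < b → T a b = ∑ c ∈ Finset.Ico (a+1) b,
      if 2*p ∣ a + c + 1 then e (auxVert p c) * (T (a+1) c * T (c+1) b) else 0) (a b i : ℕ) (hab : a ≤ b) : T (a + 2*p*i) (b + 2*p*i) = T a b := by
  induction i with
  | zero => simp
  | succ i ih =>
    rw [← ih, mul_add, mul_one, ← add_assoc, ← add_assoc]
    exact aux_shift1 p e T h0 hrec (b - a) _ _ (by omega)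

theorem auxVert_up (p : ℕ) (hp : 1 ≤ p) (l i : ℕ) (hl : l ≤ p) : auxVert p (l + 2*p*i) = l := by
  rw [auxVert, Nat.add_mul_mod_self_left, Nat.mod_eq_of_lt (by omega), if_pos hl]

theorem auxVert_down (p : ℕ) (hp : 1 ≤ p) (l i : ℕ) (hl : 1 ≤ l) (hl' : l ≤ p) : auxVert p (2*p - l + 2*p*i) = l := by
  rw [auxVert, Nat.add_mul_mod_self_left, Nat.mod_eq_of_lt (by omega)]
  split_ifs <;> omega

theorem aux_cmp1 (q x y n i : ℕ) (h : x < y) (h' : y ≤ x + q) :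
    x + q * i < y + q * n ↔ i < n + 1 := by
  constructor
  · intro h1
    by_contra h2
    have : q * (n+1) ≤ q * i := Nat.mul_le_mul_left _ (by omega)
    rw [mul_add] at this
    omega
  · intro h1
    have : q * i ≤ q * n := Nat.mul_le_mul_left _ (by omega)
    omega

theorem aux_recA (p : ℕ) (hp : 1 ≤ p) (e : ℕ → ℝ) (T : ℕ → ℕ → ℝ) (h0 : ∀ a, T a a = 1)
    (hrec : ∀ a b, a < b → T a b = ∑ c ∈ Finset.Ico (a+1) b,
      if 2*p ∣ a + c + 1 then e (auxVert p c) * (T (a+1) c * T (c+1) b) else 0) (l n : ℕ) (hl : l < p) :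
    T l (2*p - l + 2*p*n) = ∑ i ∈ Finset.range (n+1),
      (e (l+1) * T (l+1) (2*p - (l+1) + 2*p*i)) * T (2*p - l) (2*p - l + 2*p*(n-i)) := by
  rw [hrec _ _ (by omega), aux_sum_step (2*p) l (2*p - (l+1)) _ (n+1) _ (by omega) (by omega)
    (by omega) ⟨1, by omega⟩ (fun i => aux_cmp1 _ _ _ _ _ (by omega) (by omega))]
  refine Finset.sum_congr rfl fun i hi => ?_
  rw [Finset.mem_range] at hi
  rw [auxVert_down p hp _ _ (by omega) (by omega), mul_assoc (e _)]
  congr 2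
  rw [← aux_shift p e T h0 hrec (2*p-l) (2*p - l + 2*p*(n-i)) i (by omega)]
  congr 1
  · omega
  · rw [add_assoc, ← mul_add]; congr 2; omega

theorem aux_recU (p : ℕ) (hp : 1 ≤ p) (e : ℕ → ℝ) (T : ℕ → ℕ → ℝ) (h0 : ∀ a, T a a = 1)
    (hrec : ∀ a b, a < b → T a b = ∑ c ∈ Finset.Ico (a+1) b,
      if 2*p ∣ a + c + 1 then e (auxVert p c) * (T (a+1) c * T (c+1) b) else 0) (l n : ℕ) (hl : l < p) :
    T l (l + 2*p*(n+1)) = ∑ i ∈ Finset.range (n+1),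
      (e (l+1) * T (l+1) (2*p - (l+1) + 2*p*i)) * T (2*p - l) (2*p + l + 2*p*(n-i)) := by
  have hb : l + 2*p*(n+1) = 2*p + l + 2*p*n := by ring
  rw [hb, hrec _ _ (by omega), aux_sum_step (2*p) l (2*p - (l+1)) _ (n+1) _ (by omega) (by omega)
    (by omega) ⟨1, by omega⟩ (fun i => aux_cmp1 _ _ _ _ _ (by omega) (by omega))]
  refine Finset.sum_congr rfl fun i hi => ?_
  rw [Finset.mem_range] at hi
  rw [auxVert_down p hp _ _ (by omega) (by omega), mul_assoc (e _)]
  congr 2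
  rw [← aux_shift p e T h0 hrec (2*p-l) (2*p + l + 2*p*(n-i)) i (by omega)]
  congr 1
  · omega
  · rw [add_assoc _ (2*p*(n-i)), ← mul_add]; congr 2; omega

theorem aux_recD (p : ℕ) (hp : 1 ≤ p) (e : ℕ → ℝ) (T : ℕ → ℕ → ℝ) (h0 : ∀ a, T a a = 1)
    (hrec : ∀ a b, a < b → T a b = ∑ c ∈ Finset.Ico (a+1) b,
      if 2*p ∣ a + c + 1 then e (auxVert p c) * (T (a+1) c * T (c+1) b) else 0) (l n : ℕ) (hl : l < p) :
    T (2*p - (l+1)) (2*p - (l+1) + 2*p*(n+1)) = ∑ i ∈ Finset.range (n+1),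
      (e l * T (2*p - l) (2*p + l + 2*p*i)) * T (l+1) (2*p - (l+1) + 2*p*(n-i)) := by
  have hb : 2*p - (l+1) + 2*p*(n+1) = 4*p - (l+1) + 2*p*n := by
    rw [mul_add]; omega
  rw [hb, hrec _ _ (by omega), aux_sum_step (2*p) _ (2*p + l) _ (n+1) _ (by omega) (by omega)
    (by omega) ⟨2, by omega⟩ (fun i => aux_cmp1 _ _ _ _ _ (by omega) (by omega))]
  refine Finset.sum_congr rfl fun i hi => ?_
  rw [Finset.mem_range] at hi
  rw [show 2*p + l + 2*p*i = l + 2*p*(i+1) by ring,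
    auxVert_up p hp _ _ (by omega), mul_assoc (e _)]
  congr 2
  · congr 1; omega
  rw [← aux_shift p e T h0 hrec (l+1) (2*p - (l+1) + 2*p*(n-i)) (i+1) (by omega)]
  congr 1
  · ring
  · rw [add_assoc, ← mul_add, show n - i + (i+1) = n+1 by omega, mul_add]; omega

theorem aux_recB (p : ℕ) (hp : 1 ≤ p) (e : ℕ → ℝ) (T : ℕ → ℕ → ℝ) (h0 : ∀ a, T a a = 1)
    (hrec : ∀ a b, a < b → T a b = ∑ c ∈ Finset.Ico (a+1) b,
      if 2*p ∣ a + c + 1 then e (auxVert p c) * (T (a+1) c * T (c+1) b) else 0) (l n : ℕ) (hl : l < p) :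
    T (2*p - (l+1)) (2*p + (l+1) + 2*p*n) = ∑ i ∈ Finset.range (n+1),
      (e l * T (2*p - l) (2*p + l + 2*p*i)) * T (l+1) (l+1 + 2*p*(n-i)) := by
  rw [hrec _ _ (by omega), aux_sum_step (2*p) _ (2*p + l) _ (n+1) _ (by omega) (by omega)
    (by omega) ⟨2, by omega⟩ (fun i => aux_cmp1 _ _ _ _ _ (by omega) (by omega))]
  refine Finset.sum_congr rfl fun i hi => ?_
  rw [Finset.mem_range] at hi
  rw [show 2*p + l + 2*p*i = l + 2*p*(i+1) by ring,
    auxVert_up p hp _ _ (by omega), mul_assoc (e _)]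
  congr 2
  · congr 1; omega
  rw [← aux_shift p e T h0 hrec (l+1) (l+1 + 2*p*(n-i)) (i+1) (by omega)]
  congr 1
  · ring
  · rw [add_assoc _ (2*p*(n-i)), ← mul_add, show n - i + (i+1) = n+1 by omega, mul_add]; omega

theorem aux_conv (f g : ℕ → ℝ) (x : ℝ) (n : ℕ) :
    PowerSeries.coeff n (PowerSeries.C x * PowerSeries.mk f * PowerSeries.mk g)
      = ∑ i ∈ Finset.range (n+1), (x * f i) * g (n - i) := by
  rw [PowerSeries.coeff_mul, Finset.Nat.sum_antidiagonal_eq_sum_range_succ_mk]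
  simp [PowerSeries.coeff_C_mul]

open PowerSeries in
theorem aux_eq_of {t u v d : PowerSeries ℝ} (ht : constantCoeff t = 0)
    (hu : u = t * (d + u)) (hv : v = t * (d + v)) : u = v := by
  have h : (1 - t) * (u - v) = 0 := by linear_combination hu - hv
  rcases mul_eq_zero.1 h with h | h
  · have := congrArg constantCoeff h
    simp [ht] at this
  · exact sub_eq_zero.1 h

open PowerSeries in
theorem aux_main (p : ℕ) (hp : 1 ≤ p) (e : ℕ → ℝ) (T : ℕ → ℕ → ℝ) (h0 : ∀ a, T a a = 1)
    (hrec : ∀ a b, a < b → T a b = ∑ c ∈ Finset.Ico (a+1) b,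
      if 2*p ∣ a + c + 1 then e (auxVert p c) * (T (a+1) c * T (c+1) b) else 0) : ∃ P : PowerSeries ℝ, (∀ n, coeff n P = T 0 (2*p*n)) ∧
    P - 1 = X * (P * ∏ l ∈ Finset.range p, (C (e (l+1)) + C (e 0) * (P - 1))) := by
  let A : ℕ → PowerSeries ℝ := fun l => mk fun n => T l (2*p - l + 2*p*n)
  let U : ℕ → PowerSeries ℝ := fun l => mk fun n => T l (l + 2*p*n)
  let D : ℕ → PowerSeries ℝ := fun l => mk fun n => T (2*p - l) (2*p - l + 2*p*n)
  let B : ℕ → PowerSeries ℝ := fun l => mk fun n => T (2*p - l) (2*p + l + 2*p*n)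
  have hA : ∀ l < p, A l = C (e (l+1)) * A (l+1) * D l := by
    intro l hl; ext n
    rw [aux_conv, coeff_mk]; exact aux_recA p hp e T h0 hrec l n hl
  have hB : ∀ l < p, B (l+1) = C (e l) * B l * U (l+1) := by
    intro l hl; ext n
    rw [aux_conv, coeff_mk]; exact aux_recB p hp e T h0 hrec l n hl
  have hU : ∀ l < p, U l = 1 + X * (C (e (l+1)) * A (l+1) * B l) := by
    intro l hl; ext n
    cases n with
    | zero => simp [U, h0]
    | succ n =>
      rw [map_add, coeff_succ_X_mul, aux_conv, coeff_mk, coeff_one, if_neg (by omega), zero_add]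
      exact aux_recU p hp e T h0 hrec l n hl
  have hD : ∀ l < p, D (l+1) = 1 + X * (C (e l) * B l * A (l+1)) := by
    intro l hl; ext n
    cases n with
    | zero => simp [D, h0]
    | succ n =>
      rw [map_add, coeff_succ_X_mul, aux_conv, coeff_mk, coeff_one, if_neg (by omega), zero_add]
      exact aux_recD p hp e T h0 hrec l n hl
  have hB0 : B 0 = U 0 := by
    ext n
    simp only [B, U, coeff_mk]
    have := aux_shift p e T h0 hrec 0 (0 + 2*p*n) 1 (by omega)
    rw [← this]; congr 1
    · omega
    · ring
  have hDp : A p = D p := by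
    ext n
    simp only [A, D, coeff_mk]
    congr 1; omega
  refine ⟨U 0, fun n => by simp [U], ?_⟩
  -- w_l
  let w : ℕ → PowerSeries ℝ := fun l => X * (C (e l) * B l * (C (e (l+1)) * A (l+1)))
  have hw0 : w 0 = C (e 0) * (U 0 - 1) := by
    have := hU 0 (by omega)
    simp only [w]
    linear_combination (-C (e 0)) * this
  have hws : ∀ l, l + 1 < p → w (l+1) = w l := by
    intro l hl
    have e1 := hA (l+1) (by omega)
    have e2 := hB l (by omega)
    have e3 := hU (l+1) (by omega)
    have e4 := hD l (by omega)
    refine aux_eq_of (t := X * (C (e l) * B l * (C (e (l+1+1)) * A (l+1+1))))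
      (d := C (e (l+1))) (by simp) ?_ ?_
    · simp only [w]
      linear_combination (X * C (e (l+1)) * C (e (l+1+1)) * A (l+1+1)) * (e2 + C (e l) * B l * e3)
    · simp only [w]
      linear_combination (X * C (e l) * B l * C (e (l+1))) * (e1 + C (e (l+1+1)) * A (l+1+1) * e4)
  have hw : ∀ l, l < p → w l = w 0 := by
    intro l
    induction l with
    | zero => intro _; rfl
    | succ l ih => intro hl; rw [hws l hl, ih (by omega)]
  have hd : ∀ l < p, C (e (l+1)) * D (l+1) = C (e (l+1)) + C (e 0) * (U 0 - 1) := by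
    intro l hl
    rw [← hw0, ← hw l hl, hD l hl]
    simp only [w]; ring
  have hprod : ∀ m l, l + m + 1 = p → C (e (l+1)) * A (l+1) =
      ∏ i ∈ Finset.Ico l p, (C (e (i+1)) + C (e 0) * (U 0 - 1)) := by
    intro m
    induction m with
    | zero =>
      intro l hl
      obtain rfl : p = l + 1 := by omega
      rw [Nat.Ico_succ_singleton, Finset.prod_singleton, hDp, hd l (by omega)]
    | succ m ih =>
      intro l hl
      rw [Finset.prod_eq_prod_Ico_succ_bot (by omega), ← ih (l+1) (by omega), ← hd l (by omega),
        hA (l+1) (by omega)]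
      ring
  have h1 := hU 0 (by omega)
  have h2 := hprod (p-1) 0 (by omega)
  rw [Finset.range_eq_Ico, ← h2]
  rw [hB0] at h1
  linear_combination h1
theorem aux_label (p m : ℕ) : labelW p 0 m =
    if (m-1) % (2*p) < p then ((m-1) % (2*p) + 1, false) else (2*p - (m-1)%(2*p), true) := by
  unfold labelW letter0
  simp only [Nat.sub_zero, Nat.add_mod_right]
  split_ifs <;> first | rfl | omega | skip
  congr 1; omega

theorem aux_match (p x y : ℕ) (hp : 1 ≤ p) :
    (∃ l, 1 ≤ l ∧ l ≤ p ∧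
    ((labelW p 0 x = (l, false) ∧ labelW p 0 y = (l, true)) ∨
     (labelW p 0 x = (l, true) ∧ labelW p 0 y = (l, false)))) ↔ 2*p ∣ (x-1) + (y-1) + 1 := by
  rw [aux_label, aux_label]
  have hx := Nat.mod_lt (x-1) (show 2*p > 0 by omega)
  have hy := Nat.mod_lt (y-1) (show 2*p > 0 by omega)
  have hd : 2*p ∣ (x-1) + (y-1) + 1 ↔ (x-1)%(2*p) + (y-1)%(2*p) + 1 = 2*p := by
    rw [Nat.dvd_iff_mod_eq_zero]
    rw [← Nat.mod_add_mod, Nat.add_mod (x-1) (y-1), Nat.mod_add_mod, ← Nat.dvd_iff_mod_eq_zero]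
    constructor
    · rintro ⟨c, hc⟩
      have hc' : c = 1 := by
        rcases c with _ | _ | c
        · omega
        · rfl
        · exfalso
          have : 2*p*(c+1+1) = 2*p*c + 4*p := by ring
          omega
      subst hc'; omega
    · intro h; exact ⟨1, by omega⟩
  rw [hd]
  generalize (x-1)%(2*p) = r at *
  generalize (y-1)%(2*p) = s at *
  constructor
  · rintro ⟨l, h1, h2, h⟩
    split_ifs at h <;> simp only [Prod.mk.injEq, Bool.true_eq_false, Bool.false_eq_true, and_false, false_and, or_false, false_or, and_true] at h <;> omega
  · intro h
    by_cases hr : r < p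
    · refine ⟨r+1, by omega, by omega, Or.inl ?_⟩
      rw [if_pos hr, if_neg (by omega)]
      simp; omega
    · refine ⟨s+1, by omega, by omega, Or.inr ?_⟩
      rw [if_neg hr, if_pos (by omega)]
      simp; omega

noncomputable def auxE (p : ℕ) (d : Fin (p+1) → ℝ) (l : ℕ) : ℝ :=
  if h : l < p + 1 then d ⟨l, h⟩ else 0

theorem aux_weight (p : ℕ) (hp : 1 ≤ p) (d : Fin (p+1) → ℝ) (m : ℕ) :
    ∏ l : Fin (p+1), ((if labelW p 0 m = ((l:ℕ) + 1, false) then d l else 1) *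
      (if labelW p 0 m = ((l:ℕ), true) then d l else 1)) = auxE p d (auxVert p (m-1)) := by
  have hx := Nat.mod_lt (m-1) (show 2*p > 0 by omega)
  rw [aux_label, auxVert]
  generalize (m-1)%(2*p) = r at *
  have hv : (if r ≤ p then r else 2*p - r) < p + 1 := by split_ifs <;> omega
  rw [auxE, dif_pos hv, Finset.prod_eq_single (⟨_, hv⟩ : Fin (p+1))]
  · by_cases hr : r < p
    · simp [hr, hr.le]
    · simp only [if_neg hr]
      rw [if_neg (by simp), if_pos, one_mul]
      simp only [Prod.mk.injEq, and_true]
      split_ifs <;> omega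
  · rintro ⟨l, hl⟩ _ hne
    have hne' : l ≠ (if r ≤ p then r else 2*p - r) := fun h => hne (by simp [h])
    by_cases hr : r < p
    · simp only [if_pos hr]
      rw [if_pos hr.le] at hne'
      rw [if_neg (by simp; omega), if_neg (by simp), one_mul]
    · simp only [if_neg hr]
      rw [if_neg (by simp), if_neg, one_mul]
      simp only [Prod.mk.injEq, and_true]
      split_ifs at hne' <;> omega
  · simp

theorem aux_prod (p : ℕ) (hp : 1 ≤ p) (d : Fin (p+1) → ℝ) (π : Finset (ℕ × ℕ)) :
    ∏ l : Fin (p + 1), d l ^ jstat p 0 π (l : ℕ) =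
      ∏ x ∈ π, auxE p d (auxVert p (x.2-1)) := by
  simp_rw [← aux_weight p hp d]
  rw [Finset.prod_comm]
  refine Finset.prod_congr rfl fun l _ => ?_
  rw [jstat, pow_add, Finset.prod_mul_distrib, ← Finset.prod_filter, ← Finset.prod_filter,
    Finset.prod_const, Finset.prod_const]

noncomputable def auxG (p : ℕ) (d : Fin (p+1) → ℝ) (x : ℕ × ℕ) : ℝ :=
  if 2*p ∣ (x.1-1) + (x.2-1) + 1 then auxE p d (auxVert p (x.2-1)) else 0

theorem aux_lhs (p k : ℕ) (hp : 1 ≤ p) (d : Fin (p+1) → ℝ) :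
    (∑ π ∈ NCset p 0 k, ∏ l : Fin (p + 1), d l ^ jstat p 0 π (l : ℕ)) =
      auxS (auxG p d) 1 (2*p*k+1) := by
  classical
  have hset : NCset p 0 k = (auxSet 1 (2*p*k+1)).filter
      (fun π => ∀ x ∈ π, 2*p ∣ (x.1-1) + (x.2-1) + 1) := by
    ext π
    rw [Finset.mem_filter, mem_auxSet, NCset, Finset.mem_filter, AdaptedNCPP]
    simp_rw [aux_match p _ _ hp]
    have hN : IsNCPP (2*p*k) π ↔ auxNC 1 (2*p*k+1) π := by
      unfold IsNCPP auxNC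
      simp only [Nat.lt_succ_iff]
    rw [hN]
    constructor
    · exact fun h => h.2
    · refine fun h => ⟨?_, h⟩
      rw [Finset.mem_powerset]
      intro x hx
      have := h.1.1 x hx
      simp; omega
  rw [hset, Finset.sum_filter, auxS]
  refine Finset.sum_congr rfl fun π _ => ?_
  split_ifs with h
  · rw [aux_prod p hp]
    refine Finset.prod_congr rfl fun x hx => ?_
    rw [auxG, if_pos (h x hx)]
  · push Not at h
    obtain ⟨x, hx, h⟩ := h
    rw [Finset.prod_eq_zero hx]
    rw [auxG, if_neg h]

theorem aux_rhs (p k : ℕ) (hk : 1 ≤ k) (d : Fin (p + 1) → ℝ) :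
    (((1 + Polynomial.X) * ∏ l : Fin p, (Polynomial.C (d l.succ) +
      Polynomial.C (d 0) * Polynomial.X)) ^ k : Polynomial ℝ).coeff (k-1) =
      ∑ j ∈ (Finset.Nat.antidiagonalTuple (p + 1) (p * k + 1)).filter
          (fun j => ∀ l, 1 ≤ j l),
        (∏ i, (Nat.choose k (j i) : ℝ)) *
          (d 0 ^ (j 0 - 1) * ∏ l : Fin p, d l.succ ^ j l.succ) := by
  classical
  let α : Fin (p+1) → ℝ := Fin.cons 1 (fun l => d l.succ)
  let β : Fin (p+1) → ℝ := Fin.cons 1 (fun l => d 0)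
  have e1 : (((1 + Polynomial.X) * ∏ l : Fin p, (Polynomial.C (d l.succ) +
      Polynomial.C (d 0) * Polynomial.X)) ^ k : Polynomial ℝ)
      = ∏ i : Fin (p+1), ∑ j ∈ Finset.range (k+1), Polynomial.C (α i ^ j * β i ^ (k-j) * k.choose j)
          * Polynomial.X ^ (k-j) := by
    have : ((1 + Polynomial.X) * ∏ l : Fin p, (Polynomial.C (d l.succ) +
      Polynomial.C (d 0) * Polynomial.X) : Polynomial ℝ)
      = ∏ i : Fin (p+1), (Polynomial.C (α i) + Polynomial.C (β i) * Polynomial.X) := by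
      rw [Fin.prod_univ_succ]; simp [α, β]
    rw [this, ← Finset.prod_pow]
    refine Finset.prod_congr rfl fun i _ => ?_
    rw [add_pow]
    refine Finset.sum_congr rfl fun j _ => ?_
    simp only [mul_pow, map_mul, map_pow, map_natCast]
    ring
  have e2 : ∀ j : Fin (p+1) → ℕ, (∏ i, (Polynomial.C (α i ^ j i * β i ^ (k-j i) * k.choose (j i))
          * Polynomial.X ^ (k-j i)) : Polynomial ℝ).coeff (k-1)
      = if ∑ i, (k - j i) = k - 1 then ∏ i, (α i ^ j i * β i ^ (k-j i) * k.choose (j i)) else 0 := by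
    intro j
    rw [Finset.prod_mul_distrib, Finset.prod_pow_eq_pow_sum, ← map_prod, Polynomial.coeff_C_mul,
      Polynomial.coeff_X_pow]
    simp [eq_comm]
  rw [e1, Finset.prod_univ_sum, Polynomial.finsetSum_coeff]
  simp_rw [e2]
  rw [← Finset.sum_filter]
  have key : ∀ j : Fin (p+1) → ℕ, (∀ i, j i ≤ k) → ∑ i, (k - j i) + ∑ i, j i = (p+1)*k := by
    intro j hj
    rw [← Finset.sum_add_distrib, Finset.sum_congr rfl (fun i _ => Nat.sub_add_cancel (hj i))]
    simp
  have hpk : (p+1)*k = p*k + k := by ring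
  have hsub : ((Fintype.piFinset fun _ : Fin (p+1) => Finset.range (k+1)).filter
      (fun j => ∑ i, (k - j i) = k - 1)) ⊆ (Finset.Nat.antidiagonalTuple (p + 1) (p * k + 1)).filter
          (fun j => ∀ l, 1 ≤ j l) := by
    intro j hj
    simp only [Finset.mem_filter, Fintype.mem_piFinset, Finset.mem_range, Nat.lt_succ_iff] at hj
    rw [Finset.mem_filter, Finset.Nat.mem_antidiagonalTuple]
    have := key j hj.1
    refine ⟨by omega, fun l => ?_⟩
    have := Finset.single_le_sum (f := fun i => k - j i) (fun _ _ => Nat.zero_le _) (Finset.mem_univ l)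
    omega
  rw [← Finset.sum_subset hsub]
  · refine Finset.sum_congr rfl fun j hj => ?_
    have hj' := (Finset.mem_filter.1 (hsub hj)).2 0
    simp only [Finset.mem_filter, Fintype.mem_piFinset, Finset.mem_range, Nat.lt_succ_iff] at hj
    have hs := hj.2
    rw [Fin.sum_univ_succ] at hs
    have h0 := hj.1 0
    have hx : ∑ i : Fin p, (k - j i.succ) = j 0 - 1 := by omega
    rw [Finset.prod_mul_distrib, Finset.prod_mul_distrib, Fin.prod_univ_succ (fun i => α i ^ j i),
      Fin.prod_univ_succ (fun i => β i ^ (k - j i))]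
    simp only [α, β, Fin.cons_zero, Fin.cons_succ, one_pow, one_mul]
    rw [Finset.prod_pow_eq_pow_sum, hx]
    ring
  · intro j hj hnj
    rw [Finset.mem_filter, Finset.Nat.mem_antidiagonalTuple] at hj
    have : ∃ i, k < j i := by
      by_contra h
      push Not at h
      apply hnj
      simp only [Finset.mem_filter, Fintype.mem_piFinset, Finset.mem_range, Nat.lt_succ_iff]
      have := key j h
      exact ⟨h, by omega⟩
    obtain ⟨i, hi⟩ := this
    rw [Finset.prod_eq_zero (Finset.mem_univ i), zero_mul]
    rw [Nat.choose_eq_zero_of_lt hi, Nat.cast_zero]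

/-- Theorem 4.1 (explicit form of the limit-moment polynomials): for `p, k ≥ 1`,
`P_k(d₀, …, d_p) = Σ_{π ∈ NC²₂ₚₖ(W₀ᵏ)} d₀^{j₀(π)} ⋯ d_p^{j_p(π)}` equals
`Σ (1/k) ∏ᵢ C(k, jᵢ) · d₀^{j₀−1} d₁^{j₁} ⋯ d_p^{j_p}`, the sum running over all
tuples of positive integers with `j₀ + ⋯ + j_p = pk + 1`. -/
theorem P_eq_fussNarayana (p k : ℕ) (hp : 1 ≤ p) (hk : 1 ≤ k)
    (d : Fin (p + 1) → ℝ) :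
    (∑ π ∈ NCset p 0 k, ∏ l : Fin (p + 1), d l ^ jstat p 0 π (l : ℕ)) =
      ∑ j ∈ (Finset.Nat.antidiagonalTuple (p + 1) (p * k + 1)).filter
          (fun j => ∀ l, 1 ≤ j l),
        (1 / (k : ℝ)) * (∏ i, (Nat.choose k (j i) : ℝ)) *
          (d 0 ^ (j 0 - 1) * ∏ l : Fin p, d l.succ ^ j l.succ) := by
  rw [aux_lhs p k hp]
  simp_rw [mul_assoc (1 / (k:ℝ))]
  rw [← Finset.mul_sum, ← aux_rhs p k hk d]
  obtain ⟨P, hP, hPeq⟩ := aux_main p hp (auxE p d)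
    (fun a b => auxS (auxG p d) (a+1) (b+1)) (fun a => auxS_self _ _) (by
      intro a b hab
      rw [auxS_rec _ (by omega : a + 1 < b + 1), ← Finset.sum_Ico_add']
      refine Finset.sum_congr rfl fun c _ => ?_
      simp only [auxG, Nat.add_sub_cancel]
      split_ifs <;> simp)
  set φ : Polynomial ℝ := (1 + Polynomial.X) * ∏ l : Fin p, (Polynomial.C (d l.succ) +
      Polynomial.C (d 0) * Polynomial.X) with hφ
  have hv : P - 1 = PowerSeries.X * Polynomial.aeval (P - 1) φ := by
    have : Polynomial.aeval (P - 1) φ = P * ∏ l ∈ Finset.range p, (PowerSeries.C (auxE p d (l+1))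
        + PowerSeries.C (auxE p d 0) * (P - 1)) := by
      rw [hφ, map_mul, map_prod, Finset.prod_range]
      congr 1
      · simp
      · refine Finset.prod_congr rfl fun l _ => ?_
        have h1 : auxE p d (l+1) = d l.succ := by
          rw [auxE, dif_pos (by omega)]; rfl
        have h2 : auxE p d 0 = d 0 := by
          rw [auxE, dif_pos (by omega)]; rfl
        rw [h1, h2]
        simp
    rw [this, ← hPeq]
  have hL := aux_lagrange φ (P - 1) hv k Polynomial.X
  have hk0 : (k : ℝ) ≠ 0 := by positivity
  rw [Polynomial.aeval_X, map_sub, hP, PowerSeries.coeff_one, if_neg (by omega), sub_zero] at hL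
  obtain ⟨n, rfl⟩ : ∃ n, k = n + 1 := ⟨k - 1, by omega⟩
  rw [Polynomial.derivative_X, mul_one, Polynomial.coeff_X_mul] at hL
  rw [Nat.add_sub_cancel, ← hL]
  field_simp
end
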